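/- arXiv:2505.13781 — 2 statements merged into one kernel-verified Lean document; each statement's English description precedes it below -/
import Mathlib

section
/- Let ĉ : 𝔽₂³ ∖ {0} → {1, 2} be the colouring that assigns colour 1 to the three standard basis vectors of 𝔽₂³ and colour 2 to the other four nonzero vectors. There exists a constant C > 0 such that for every n ∈ ℕ and every colouring c : 𝔽₂ⁿ ∖ {0} → {1, 2} for which there is no injective linear map φ : 𝔽₂³ → 𝔽₂ⁿ satisfying c(φ(v)) = ĉ(v) for all nonzero v ∈ 𝔽₂³, there is a linear subspace W of 𝔽₂ⁿ with dim W ≥ C·n^{1/7} on whose nonzero vectors c is constant. -/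
open Classical in
/-- The claw colouring of the Fano plane: the nonzero vectors of `𝔽₂³` are coloured
with colour `0` on the three standard basis vectors and colour `1` elsewhere. -/
noncomputable def clawColouring : (Fin 3 → ZMod 2) → Fin 2 :=
  fun v => if ∃ i : Fin 3, v = Pi.single i 1 then 0 else 1

/-!
Let `E` be the claw-free set of nonzero vectors of colour `0`.

If every subspace avoiding `E` has dimension at most one, then the nonzero vectors outside `E` form
a sum-free set `F`. When `F` meets every `d`-dimensional subspace, a density increment of
Kelley–Meka type (sifting, almost-periods of a normalised autocorrelation, and Chang's lemma) can be
iterated `O(d)` times, each step costing `O(d ^ 6)` dimensions, whence `dim V = O(d ^ 7)`. Here `d`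
exceeds the largest dimension of a subspace with all nonzero vectors in `E`.

Otherwise fix a maximal subspace `W` avoiding `E`, of dimension at least two. For three elements of
`E` summing into `W`, claw-freeness ties together the traces of `E` on their cosets of `W`. Unless
`E` is, outside a proper nonzero subspace `V₀`, a union of cosets of `V₀`, the stabilisers in `W` of
all traces have dimension at most one or all have codimension at most one. Labelling each coset by
the generator of its stabiliser, respectively by the functional whose kernel is the stabiliser,
yields a subspace `Y` with all nonzero vectors in `E` and `dim V ≤ 2 * dim W + dim Y`.

If such a `V₀` does exist, homogeneous subspaces of `V₀` and of a complement can be added up, and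
superadditivity of `t ↦ t ^ 7` lets the bound pass to `V` by induction.
-/

universe u

namespace ClawRamsey

open Module Submodule

/-! ### Linear algebra over `𝔽₂` -/

section LinearAlgebra

variable {V : Type*} [AddCommGroup V] [Module (ZMod 2) V]

theorem zmod_two_eq_zero_or_one (a : ZMod 2) : a = 0 ∨ a = 1 := by
  revert a
  decide

theorem zmod_two_ne_zero_iff {a : ZMod 2} : a ≠ 0 ↔ a = 1 := by
  revert a
  decide

theorem add_eq_zero_iff_eq {x y : V} : x + y = 0 ↔ x = y := by
  rw [add_eq_zero_iff_eq_neg, ZModModule.neg_eq_self]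

theorem mkQ_eq_mkQ_iff {W : Submodule (ZMod 2) V} {x y : V} :
    W.mkQ x = W.mkQ y ↔ x + y ∈ W := by
  rw [← sub_eq_zero, ← map_sub, ZModModule.sub_eq_add, ← LinearMap.mem_ker, ker_mkQ]

theorem mem_span_singleton_iff_eq {v x : V} : x ∈ span (ZMod 2) {v} ↔ x = 0 ∨ x = v := by
  rw [mem_span_singleton]
  refine ⟨?_, ?_⟩
  · rintro ⟨a, rfl⟩
    rcases zmod_two_eq_zero_or_one a with rfl | rfl <;> simp
  · rintro (rfl | rfl)
    exacts [⟨0, zero_smul _ _⟩, ⟨1, one_smul _ _⟩]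

theorem mem_sup_span_singleton {W : Submodule (ZMod 2) V} {v x : V} :
    x ∈ W ⊔ span (ZMod 2) {v} ↔ x ∈ W ∨ x + v ∈ W := by
  refine ⟨fun h => ?_, ?_⟩
  · obtain ⟨w, hw, y, hy, rfl⟩ := mem_sup.1 h
    rcases mem_span_singleton_iff_eq.1 hy with rfl | rfl
    · exact .inl (by rwa [add_zero])
    · exact .inr (by rwa [add_assoc, ZModModule.add_self, add_zero])
  · rintro (h | h)
    · exact mem_sup_left h
    · exact (Submodule.add_mem_iff_left _ (mem_sup_right (mem_span_singleton_self v))).1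
        (mem_sup_left h)

theorem add_span_induction {s : Set V} {p : V → Prop} (hadd : ∀ x ∈ s, ∀ v, p v → p (v + x))
    {v : V} (hv : v ∈ span (ZMod 2) s) : ∀ u, p u → p (u + v) := by
  induction hv using span_induction with
  | mem x hx => exact hadd x hx
  | zero => exact fun u hu => by rwa [add_zero]
  | add x y _ _ ihx ihy => exact fun u hu => by simpa only [add_assoc] using ihy _ (ihx u hu)
  | smul a x _ ih =>
    intro u hu
    rcases zmod_two_eq_zero_or_one a with rfl | rfl
    · rwa [zero_smul, add_zero]
    · simpa only [one_smul] using ih u hu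

theorem le_or_le_of_sup_subset_union {R M : Type*} [Ring R] [AddCommGroup M] [Module R M]
    {A B : Submodule R M} (h : ∀ s ∈ A ⊔ B, s ∈ A ∨ s ∈ B) : A ≤ B ∨ B ≤ A := by
  by_contra! hcon
  obtain ⟨p, hpA, hpB⟩ := SetLike.not_le_iff_exists.1 hcon.1
  obtain ⟨q, hqB, hqA⟩ := SetLike.not_le_iff_exists.1 hcon.2
  rcases h (p + q) (add_mem_sup hpA hqB) with hs | hs
  · exact hqA ((Submodule.add_mem_iff_right A hpA).1 hs)
  · exact hpB ((Submodule.add_mem_iff_left B hqB).1 hs)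

theorem exists_mem_notMem_notMem {R M : Type*} [Ring R] [AddCommGroup M] [Module R M]
    {S B C : Submodule R M} (hB : ¬ S ≤ B) (hC : ¬ S ≤ C) : ∃ a ∈ S, a ∉ B ∧ a ∉ C := by
  obtain ⟨p, hpS, hpB⟩ := SetLike.not_le_iff_exists.1 hB
  obtain ⟨q, hqS, hqC⟩ := SetLike.not_le_iff_exists.1 hC
  by_cases hpC : p ∈ C
  · by_cases hqB : q ∈ B
    · exact ⟨p + q, S.add_mem hpS hqS, fun h => hpB ((Submodule.add_mem_iff_left B hqB).1 h),
        fun h => hqC ((Submodule.add_mem_iff_right C hpC).1 h)⟩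
    · exact ⟨q, hqS, hqB, hqC⟩
  · exact ⟨p, hpS, hpB, hpC⟩

theorem add_mem_of_union_three {S A B C : Submodule (ZMod 2) V} (hB : ¬ S ≤ B)
    (hC : ¬ S ≤ C) (h : ∀ s ∈ S, s ∈ A ∨ s ∈ B ∨ s ∈ C) {s t : V}
    (hs : s ∈ S) (ht : t ∈ S) (hsA : s ∉ A) (htA : t ∉ A) : s + t ∈ A := by
  obtain ⟨a, haS, haB, haC⟩ := exists_mem_notMem_notMem hB hC
  have haA : a ∈ A := (h a haS).resolve_right (by tauto)
  have shift (x : V) : x + a ∈ A ↔ x ∈ A := Submodule.add_mem_iff_left A haA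
  -- Translation by `a` exchanges `B \ A` and `C \ A`.
  have swap : ∀ x ∈ S, x ∉ A → (x ∈ B ∧ x ∉ C ∧ x + a ∈ C) ∨ (x ∈ C ∧ x ∉ B ∧ x + a ∈ B) := by
    intro x hx hxA
    have h₁ := h x hx
    have h₂ := h (x + a) (S.add_mem hx haS)
    have hB' : x ∈ B → x + a ∉ B := fun hxB => mt (Submodule.add_mem_iff_right B hxB).1 haB
    have hC' : x ∈ C → x + a ∉ C := fun hxC => mt (Submodule.add_mem_iff_right C hxC).1 haC
    have := shift x
    tauto
  have main : ∀ x ∈ S, ∀ y ∈ S, x ∉ A → y ∉ A → x ∈ B → y ∈ B → x + y ∈ A := by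
    intro x hx y hy hxA hyA hxB hyB
    by_contra hxy
    have hxC : x + a ∈ C := by have := swap x hx hxA; tauto
    have hyC : y + a ∈ C := by have := swap y hy hyA; tauto
    have hxyC : x + y ∈ C := by
      have := C.add_mem hxC hyC
      rwa [show x + a + (y + a) = x + y by grind [ZModModule.add_self a]] at this
    have := swap (x + y) (S.add_mem hx hy) hxy
    have := B.add_mem hxB hyB
    tauto
  have toB : ∀ x ∈ S, x ∉ A → ∃ x' ∈ S, x' ∉ A ∧ x' ∈ B ∧ (x' = x ∨ x' = x + a) := by
    intro x hx hxA
    rcases swap x hx hxA with hx' | hx'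
    · exact ⟨x, hx, hxA, hx'.1, .inl rfl⟩
    · exact ⟨x + a, S.add_mem hx haS, mt (shift x).1 hxA, hx'.2.2, .inr rfl⟩
  obtain ⟨s', hs', hsA', hsB', hs_eq⟩ := toB s hs hsA
  obtain ⟨t', ht', htA', htB', ht_eq⟩ := toB t ht htA
  have hst := main s' hs' t' ht' hsA' htA' hsB' htB'
  rcases hs_eq with rfl | rfl <;> rcases ht_eq with rfl | rfl
  · exact hst
  · rwa [← add_assoc, shift] at hst
  · rwa [add_right_comm, shift] at hst
  · rwa [← add_assoc, shift, add_right_comm, shift] at hst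

theorem finrank_eq_add_one_of_add_mem [FiniteDimensional (ZMod 2) V] {S A : Submodule (ZMod 2) V}
    (hA : A ≤ S) (hS : ¬ S ≤ A) (h : ∀ s ∈ S, ∀ t ∈ S, s ∉ A → t ∉ A → s + t ∈ A) :
    finrank (ZMod 2) S = finrank (ZMod 2) A + 1 := by
  obtain ⟨p, hpS, hpA⟩ := SetLike.not_le_iff_exists.1 hS
  have hS : S = A ⊔ span (ZMod 2) {p} := by
    refine le_antisymm (fun s hs => ?_) (sup_le hA ((span_singleton_le_iff_mem p S).2 hpS))
    rw [mem_sup_span_singleton]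
    by_cases hsA : s ∈ A
    · exact .inl hsA
    · exact .inr (h s hs p hpS hsA hpA)
  rw [hS, finrank_sup_span_singleton hpA]

theorem finrank_eq_add_one_of_union_three [FiniteDimensional (ZMod 2) V]
    {S A B C : Submodule (ZMod 2) V} (hA : A < S) (hB : ¬ S ≤ B) (hC : ¬ S ≤ C)
    (h : ∀ s ∈ S, s ∈ A ∨ s ∈ B ∨ s ∈ C) : finrank (ZMod 2) S = finrank (ZMod 2) A + 1 :=
  finrank_eq_add_one_of_add_mem hA.le hA.not_ge fun _ hs _ ht hsA htA =>
    add_mem_of_union_three hB hC h hs ht hsA htA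

end LinearAlgebra

/-! ### Sifting and almost-periodicity -/

section Autocorrelation

variable {V : Type*}

open Classical in
/-- The real-valued indicator function of a finite set. -/
noncomputable def ind (A : Finset V) (x : V) : ℝ := if x ∈ A then 1 else 0

theorem ind_nonneg (A : Finset V) (x : V) : 0 ≤ ind A x := by
  unfold ind
  split_ifs <;> norm_num

/-- The total weight of the sums `x + y` of pairs of elements of `A`. -/
def pairSum [Add V] (A : Finset V) (w : V → ℝ) : ℝ := ∑ x ∈ A, ∑ y ∈ A, w (x + y)

theorem pairSum_one [Add V] (A : Finset V) : pairSum A (fun _ => 1) = (A.card : ℝ) ^ 2 := by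
  simp [pairSum, sq]

theorem pairSum_nonneg [Add V] (A : Finset V) {w : V → ℝ} (hw : ∀ z, 0 ≤ w z) :
    0 ≤ pairSum A w :=
  Finset.sum_nonneg fun _ _ => Finset.sum_nonneg fun _ _ => hw _

variable [Fintype V]

theorem sum_mul_ind (A : Finset V) (f : V → ℝ) : ∑ x, f x * ind A x = ∑ x ∈ A, f x := by
  simp [ind]

theorem sum_ind (A : Finset V) : ∑ x, ind A x = A.card := by
  simp [ind]

theorem card_pos_real [Nonempty V] : (0 : ℝ) < Fintype.card V := by
  exact_mod_cast Fintype.card_pos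

variable [AddCommGroup V]

/-- The autocorrelation of `u`; in characteristic 2 this is also the convolution `u * u`. -/
def autocorr (u : V → ℝ) (z : V) : ℝ := ∑ t, u t * u (t + z)

/-- The autocorrelation of the indicator of `A`, scaled to have mean 1. -/
noncomputable def normAutocorr (A : Finset V) (z : V) : ℝ :=
  Fintype.card V / (A.card : ℝ) ^ 2 * autocorr (ind A) z

open Classical in
/-- The set of those `x` all of whose translates `x + s i` lie in `A`. -/
noncomputable def interTranslates (A : Finset V) {k : ℕ} (s : Fin k → V) : Finset V :=
  {x | ∀ i, x + s i ∈ A}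

theorem sum_add_right (u : V → ℝ) (z : V) : ∑ t, u (t + z) = ∑ t, u t :=
  Equiv.sum_comp (Equiv.addRight z) u

theorem sum_add_left (u : V → ℝ) (z : V) : ∑ t, u (z + t) = ∑ t, u t :=
  Equiv.sum_comp (Equiv.addLeft z) u

theorem autocorr_ind_nonneg (A : Finset V) (z : V) : 0 ≤ autocorr (ind A) z :=
  Finset.sum_nonneg fun _ _ => mul_nonneg (ind_nonneg _ _) (ind_nonneg _ _)

theorem normAutocorr_nonneg (A : Finset V) (z : V) : 0 ≤ normAutocorr A z :=
  mul_nonneg (by positivity) (autocorr_ind_nonneg A z)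

theorem mul_pairSum_ite_le (A A' : Finset V) (u : V) :
    5 / 4 * pairSum A' (fun z => if 5 / 4 ≤ normAutocorr A (z + u) then 1 else 0) ≤
      pairSum A' fun z => normAutocorr A (z + u) := by
  simp only [pairSum, Finset.mul_sum]
  refine Finset.sum_le_sum fun x _ => Finset.sum_le_sum fun y _ => ?_
  split_ifs with h
  · simpa using h
  · simpa using normAutocorr_nonneg A _

theorem autocorr_sub_const (u : V → ℝ) (c : ℝ) (z : V) : autocorr (fun x => u x - c) z =
    autocorr u z - 2 * c * ∑ t, u t + Fintype.card V * c ^ 2 := by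
  have expand (t : V) : (u t - c) * (u (t + z) - c) =
      u t * u (t + z) - c * u (t + z) - c * u t + c ^ 2 := by ring
  simp_rw [autocorr, expand]
  rw [Finset.sum_add_distrib, Finset.sum_sub_distrib, Finset.sum_sub_distrib, ← Finset.mul_sum,
    ← Finset.mul_sum, sum_add_right, Finset.sum_const, Finset.card_univ, nsmul_eq_mul]
  ring

theorem normAutocorr_sub_one {A : Finset V} (hA : A.Nonempty) (z : V) : normAutocorr A z - 1 =
    Fintype.card V / (A.card : ℝ) ^ 2 *
      autocorr (fun x => ind A x - A.card / Fintype.card V) z := by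
  rw [autocorr_sub_const, sum_ind, normAutocorr]
  have hA₀ : (A.card : ℝ) ≠ 0 := by exact_mod_cast hA.card_pos.ne'
  have hV₀ : (Fintype.card V : ℝ) ≠ 0 := (card_pos_real (V := V)).ne'
  field_simp
  ring

theorem prod_ind_add (A : Finset V) {k : ℕ} (s : Fin k → V) (x : V) :
    ∏ i, ind A (x + s i) = ind (interTranslates A s) x := by
  simp only [ind, Finset.prod_ite_zero, Finset.prod_const_one]
  congr 1
  simp [interTranslates]

theorem sum_card_interTranslates (A : Finset V) (k : ℕ) :
    ∑ s : Fin k → V, ((interTranslates A s).card : ℝ) = Fintype.card V * (A.card : ℝ) ^ k := by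
  have sum_prod (x : V) : ∑ s : Fin k → V, ∏ i, ind A (x + s i) = (A.card : ℝ) ^ k := by
    rw [← Fintype.sum_pow (fun t => ind A (x + t)) k, sum_add_left, sum_ind]
  simp_rw [← sum_ind, ← prod_ind_add]
  rw [Finset.sum_comm]
  simp [sum_prod, sum_ind]

variable [Module (ZMod 2) V]

theorem sum_mul_add_eq_autocorr (u : V → ℝ) (x y : V) :
    ∑ t, u (x + t) * u (y + t) = autocorr u (x + y) := by
  rw [autocorr, ← sum_add_left _ x]
  refine Finset.sum_congr rfl fun t _ => ?_
  congr 2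
  · grind [ZModModule.add_self x]
  · abel

theorem sum_translates_eq_moment (u w : V → ℝ) (k : ℕ) :
    ∑ s : Fin k → V, ∑ x, ∑ y, w (x + y) * ((∏ i, u (x + s i)) * ∏ i, u (y + s i)) =
      Fintype.card V * ∑ z, w z * autocorr u z ^ k := by
  have fix_left (x : V) :
      ∑ s : Fin k → V, ∑ y, w (x + y) * ((∏ i, u (x + s i)) * ∏ i, u (y + s i)) =
        ∑ z, w z * autocorr u z ^ k := by
    rw [Finset.sum_comm, ← sum_add_left (fun z => w z * autocorr u z ^ k) x]
    refine Finset.sum_congr rfl fun y _ => ?_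
    simp_rw [← Finset.prod_mul_distrib]
    rw [← Finset.mul_sum, ← sum_mul_add_eq_autocorr, Fintype.sum_pow]
  rw [Finset.sum_comm, Finset.sum_congr rfl fun x _ => fix_left x, Finset.sum_const,
    Finset.card_univ, nsmul_eq_mul]

theorem sum_pairSum_interTranslates (A : Finset V) (w : V → ℝ) (k : ℕ) :
    ∑ s : Fin k → V, pairSum (interTranslates A s) w =
      Fintype.card V * ∑ z, w z * autocorr (ind A) z ^ k := by
  rw [← sum_translates_eq_moment]
  refine Finset.sum_congr rfl fun s _ => ?_
  rw [pairSum, ← sum_mul_ind]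
  refine Finset.sum_congr rfl fun x _ => ?_
  rw [← sum_mul_ind, Finset.sum_mul]
  refine Finset.sum_congr rfl fun y _ => ?_
  rw [prod_ind_add, prod_ind_add]
  ring

theorem sum_autocorr_pow_nonneg (u : V → ℝ) (k : ℕ) : 0 ≤ ∑ z, autocorr u z ^ k := by
  refine nonneg_of_mul_nonneg_right ?_ (card_pos_real (V := V))
  have moment := sum_translates_eq_moment u (fun _ => 1) k
  simp only [one_mul] at moment
  rw [← moment]
  refine Finset.sum_nonneg fun s _ => ?_
  rw [← Finset.sum_mul_sum]
  exact mul_self_nonneg _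

theorem sum_normAutocorr_sub_one_pow_nonneg {A : Finset V} (hA : A.Nonempty) (k : ℕ) :
    0 ≤ ∑ z, (normAutocorr A z - 1) ^ k := by
  simp_rw [normAutocorr_sub_one hA, mul_pow]
  rw [← Finset.mul_sum]
  exact mul_nonneg (by positivity) (sum_autocorr_pow_nonneg _ _)

/- All central moments are nonnegative, so every term of the binomial expansion of
`((normAutocorr A z - 1) + 1) ^ n` bounds the `n`-th moment from below. -/
theorem choose_mul_sum_le_sum_normAutocorr_pow {A : Finset V} (hA : A.Nonempty) {n j : ℕ}
    (hj : j ≤ n) :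
    (n.choose j : ℝ) * ∑ z, (normAutocorr A z - 1) ^ j ≤ ∑ z, normAutocorr A z ^ n := by
  have expansion : ∑ z, normAutocorr A z ^ n = ∑ j ∈ Finset.range (n + 1),
      (n.choose j : ℝ) * ∑ z, (normAutocorr A z - 1) ^ j := by
    simp_rw [Finset.mul_sum]
    rw [Finset.sum_comm]
    refine Finset.sum_congr rfl fun z _ => ?_
    rw [← sub_add_cancel (normAutocorr A z) 1, add_pow]
    simp [mul_comm]
  rw [expansion]
  exact Finset.single_le_sum (f := fun j => (n.choose j : ℝ) * ∑ z, (normAutocorr A z - 1) ^ j)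
    (fun j _ => mul_nonneg (by positivity) (sum_normAutocorr_sub_one_pow_nonneg hA j))
    (Finset.mem_range.2 (by omega))

theorem eight_pow_le_two_mul_choose {d : ℕ} (hd : 1 ≤ d) :
    8 ^ d ≤ 2 * (4 * d).choose (2 * d) := by
  have central := Nat.four_pow_le_two_mul_self_mul_centralBinom (2 * d) (by omega)
  rw [Nat.centralBinom, show 2 * (2 * d) = 4 * d by ring] at central
  have two_mul_le : 2 * d ≤ 2 ^ d := by
    have := Nat.lt_two_pow_self (n := d - 1)
    have : 2 ^ d = 2 * 2 ^ (d - 1) := by rw [← pow_succ', Nat.sub_add_cancel hd]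
    omega
  refine Nat.le_of_mul_le_mul_left (c := 2 ^ d) ?_ (by positivity)
  calc 2 ^ d * 8 ^ d = 4 ^ (2 * d) := by rw [← mul_pow, pow_mul]; norm_num
    _ ≤ 2 * d * (2 * (4 * d).choose (2 * d)) := by linarith
    _ ≤ 2 ^ d * (2 * (4 * d).choose (2 * d)) := by gcongr

/- Where the autocorrelation vanishes, its normalisation deviates from 1 by exactly 1, which makes
the central moment of order `2 * d` at least the number of such points. -/
theorem four_pow_mul_card_le_sum_normAutocorr_pow {A B : Finset V} (hA : A.Nonempty) {d : ℕ}
    (hd : 1 ≤ d) (hB : ∀ z ∈ B, autocorr (ind A) z = 0)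
    (hBcard : (Fintype.card V : ℝ) ≤ 2 ^ d * B.card) :
    4 ^ d / 2 * (Fintype.card V : ℝ) ≤ ∑ z, normAutocorr A z ^ (4 * d) := by
  have central : (B.card : ℝ) ≤ ∑ z, (normAutocorr A z - 1) ^ (2 * d) := by
    calc (B.card : ℝ) = ∑ z ∈ B, (normAutocorr A z - 1) ^ (2 * d) := by
          rw [Finset.sum_congr rfl (g := fun _ => (1 : ℝ))]
          · simp
          · intro z hz
            simp [normAutocorr, hB z hz, pow_mul]
      _ ≤ _ := Finset.sum_le_sum_of_subset_of_nonneg (Finset.subset_univ _)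
          fun z _ _ => (even_two_mul d).pow_nonneg _
  have choose_ge : (8 : ℝ) ^ d / 2 ≤ (4 * d).choose (2 * d) := by
    have : (8 : ℝ) ^ d ≤ 2 * (4 * d).choose (2 * d) := by
      exact_mod_cast eight_pow_le_two_mul_choose hd
    linarith
  calc 4 ^ d / 2 * (Fintype.card V : ℝ) ≤ 4 ^ d / 2 * (2 ^ d * B.card) := by gcongr
    _ = 8 ^ d / 2 * B.card := by rw [show (8 : ℝ) = 4 * 2 by norm_num, mul_pow]; ring
    _ ≤ ((4 * d).choose (2 * d) : ℝ) * ∑ z, (normAutocorr A z - 1) ^ (2 * d) := by gcongr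
    _ ≤ _ := choose_mul_sum_le_sum_normAutocorr_pow hA (by omega)

/- Dependent random choice: for a random tuple `s` of translations the expected value of
`|A'|² - 40 * pairSum A' w - τ * |A'|`, where `A' = interTranslates A s` and `τ` is the lower
bound claimed for `|A'|`, is positive. -/
theorem exists_card_le_and_pairSum_le {A : Finset V} (hA : A.Nonempty) {w : V → ℝ}
    (hw : ∀ z, 0 ≤ w z) {k : ℕ}
    (h : Fintype.card V / 2 + 40 * ∑ z, w z * normAutocorr A z ^ k <
      ∑ z, normAutocorr A z ^ k) :
    ∃ A' : Finset V, 1 / 2 * Fintype.card V * ((A.card : ℝ) / Fintype.card V) ^ k ≤ A'.card ∧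
      40 * pairSum A' w ≤ (A'.card : ℝ) ^ 2 := by
  set M : ℝ := (Fintype.card V : ℝ) with hM
  set a : ℝ := (A.card : ℝ) with ha
  have hM₀ : 0 < M := card_pos_real
  have ha₀ : 0 < a := by rw [ha]; exact_mod_cast hA.card_pos
  set τ := 1 / 2 * M * (a / M) ^ k with hτ
  have hτ₀ : 0 < τ := by positivity
  have moment (v : V → ℝ) : ∑ z, v z * autocorr (ind A) z ^ k =
      (a ^ 2 / M) ^ k * ∑ z, v z * normAutocorr A z ^ k := by
    rw [Finset.mul_sum]
    refine Finset.sum_congr rfl fun z _ => ?_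
    rw [normAutocorr, mul_pow, mul_left_comm, ← mul_assoc _ _ (autocorr _ _ ^ k), ← mul_pow]
    rw [← hM, ← ha, show a ^ 2 / M * (M / a ^ 2) = 1 by field_simp, one_pow, one_mul]
  have average : ∑ s : Fin k → V,
      (τ * (interTranslates A s).card + 40 * pairSum (interTranslates A s) w) <
        ∑ s : Fin k → V, pairSum (interTranslates A s) fun _ => 1 := by
    rw [Finset.sum_add_distrib, ← Finset.mul_sum, ← Finset.mul_sum, sum_card_interTranslates,
      sum_pairSum_interTranslates, sum_pairSum_interTranslates, moment, moment]
    have hτM : τ * (M * a ^ k) = M * (a ^ 2 / M) ^ k * (M / 2) := by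
      rw [hτ, div_pow, div_pow, ← pow_mul, mul_comm 2, pow_mul a k 2]
      ring
    rw [← hM, hτM]
    simp only [one_mul]
    have := mul_lt_mul_of_pos_left h (show 0 < M * (a ^ 2 / M) ^ k by positivity)
    linarith
  obtain ⟨s, -, hs⟩ := Finset.exists_lt_of_sum_lt average
  rw [pairSum_one] at hs
  have := pairSum_nonneg (interTranslates A s) hw
  have : 0 ≤ τ * (interTranslates A s).card := by positivity
  refine ⟨interTranslates A s, ?_, by linarith⟩
  by_contra! hlt
  nlinarith

theorem sifting {A B : Finset V} (hA : A.Nonempty) {d : ℕ} (hd : 20 ≤ d)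
    (hB : ∀ z ∈ B, autocorr (ind A) z = 0) (hBcard : (Fintype.card V : ℝ) ≤ 2 ^ d * B.card) :
    ∃ A' : Finset V, 1 / 2 * Fintype.card V * ((A.card : ℝ) / Fintype.card V) ^ (4 * d) ≤ A'.card ∧
      40 * pairSum A' (fun z => if 5 / 4 ≤ normAutocorr A z then 0 else 1) ≤
        (A'.card : ℝ) ^ 2 := by
  refine exists_card_le_and_pairSum_le hA (fun z => by split_ifs <;> norm_num) ?_
  have weighted : ∑ z, (if 5 / 4 ≤ normAutocorr A z then (0 : ℝ) else 1) *
      normAutocorr A z ^ (4 * d) ≤ Fintype.card V * (5 / 2) ^ d := by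
    rw [← nsmul_eq_mul, ← Finset.card_univ]
    refine Finset.sum_le_card_nsmul _ _ _ fun z _ => ?_
    split_ifs with hz
    · rw [zero_mul]
      positivity
    · have hF := normAutocorr_nonneg A z
      have hF4 : normAutocorr A z ^ 4 ≤ (5 / 4) ^ 4 := by gcongr; linarith
      rw [one_mul, pow_mul]
      exact pow_le_pow_left₀ (by positivity) (hF4.trans (by norm_num)) d
  have moment := four_pow_mul_card_le_sum_normAutocorr_pow hA (by omega) hB hBcard
  have gap : (1 : ℝ) / 2 + 40 * (5 / 2) ^ d < 4 ^ d / 2 := by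
    have split : (4 : ℝ) ^ d = (5 / 2) ^ d * (8 / 5) ^ d := by rw [← mul_pow]; norm_num
    have large : (1000 : ℝ) ≤ (8 / 5) ^ d :=
      le_trans (by norm_num) (pow_le_pow_right₀ (by norm_num) hd)
    have one_le : (1 : ℝ) ≤ (5 / 2) ^ d := one_le_pow₀ (by norm_num)
    nlinarith
  have := mul_lt_mul_of_pos_left gap (card_pos_real (V := V))
  linarith

end Autocorrelation

section Sampling

theorem sum_exp_mul_le {α : Type*} {A : Finset α} {c : α → ℝ} (hc : ∀ a ∈ A, |c a| ≤ 1)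
    (hsum : ∑ a ∈ A, c a = 0) (ε : ℝ) :
    ∑ a ∈ A, Real.exp (c a * ε) ≤ A.card * Real.exp (ε ^ 2 / 2) := by
  calc ∑ a ∈ A, Real.exp (c a * ε) ≤ ∑ a ∈ A, (Real.cosh ε + c a * Real.sinh ε) :=
        Finset.sum_le_sum fun a ha => Real.exp_mul_le_cosh_add_mul_sinh (hc a ha) ε
    _ = A.card * Real.cosh ε := by
        rw [Finset.sum_add_distrib, ← Finset.sum_mul, hsum]
        simp
    _ ≤ _ := by
        gcongr
        exact Real.cosh_le_exp_half_sq ε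

theorem hoeffding_card {α : Type*} {A : Finset α} {c : α → ℝ} (hc : ∀ a ∈ A, |c a| ≤ 1)
    (hsum : ∑ a ∈ A, c a = 0) (k : ℕ) {ε : ℝ} (hε : 0 ≤ ε) :
    (({p ∈ Fintype.piFinset fun _ : Fin k => A | k * ε < ∑ i, c (p i)}).card : ℝ) ≤
      (A.card : ℝ) ^ k * Real.exp (-(k * ε ^ 2 / 2)) := by
  set P := Fintype.piFinset fun _ : Fin k => A
  set T := {p ∈ P | k * ε < ∑ i, c (p i)}
  have moment : ∑ p ∈ P, Real.exp (ε * ∑ i, c (p i)) = (∑ a ∈ A, Real.exp (c a * ε)) ^ k := by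
    rw [Finset.sum_pow']
    refine Finset.sum_congr rfl fun p _ => ?_
    rw [← Real.exp_sum, Finset.mul_sum]
    simp_rw [mul_comm]
  have markov : T.card * Real.exp (k * ε ^ 2) ≤ (A.card : ℝ) ^ k * Real.exp (k * ε ^ 2 / 2) := by
    calc T.card * Real.exp (k * ε ^ 2) = ∑ p ∈ T, Real.exp (k * ε ^ 2) := by simp
      _ ≤ ∑ p ∈ T, Real.exp (ε * ∑ i, c (p i)) := by
          refine Finset.sum_le_sum fun p hp => Real.exp_le_exp.2 ?_
          have := (Finset.mem_filter.1 hp).2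
          nlinarith
      _ ≤ ∑ p ∈ P, Real.exp (ε * ∑ i, c (p i)) :=
          Finset.sum_le_sum_of_subset_of_nonneg (Finset.filter_subset _ _)
            fun _ _ _ => (Real.exp_pos _).le
      _ ≤ (A.card * Real.exp (ε ^ 2 / 2)) ^ k := by
          rw [moment]
          exact pow_le_pow_left₀ (Finset.sum_nonneg fun _ _ => (Real.exp_pos _).le)
            (sum_exp_mul_le hc hsum ε) k
      _ = _ := by
          rw [mul_pow, ← Real.exp_nat_mul]
          congr 2
          ring
  refine le_of_mul_le_mul_right (markov.trans_eq ?_) (Real.exp_pos (k * ε ^ 2))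
  rw [mul_assoc, ← Real.exp_add]
  congr 2
  ring

section Averages

variable {V : Type*} [Add V]

/-- The average of `f` over the translate `x + A`. -/
noncomputable def translateAvg (A : Finset V) (f : V → ℝ) (x : V) : ℝ :=
  (∑ a ∈ A, f (x + a)) / A.card

/-- The average of `f` over the points `x + p i`, an estimate of `translateAvg A f x` when `p` is a
random tuple of elements of `A`. -/
noncomputable def sampleAvg {k : ℕ} (f : V → ℝ) (p : Fin k → V) (x : V) : ℝ :=
  (∑ i, f (x + p i)) / k

theorem translateAvg_mem_Icc {A : Finset V} {f : V → ℝ} (hf : ∀ x, f x ∈ Set.Icc 0 1) (x : V) :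
    translateAvg A f x ∈ Set.Icc 0 1 := by
  refine ⟨div_nonneg (Finset.sum_nonneg fun _ _ => (hf _).1) (by positivity),
    div_le_one_of_le₀ ?_ (by positivity)⟩
  exact (Finset.sum_le_card_nsmul A _ 1 fun _ _ => (hf _).2).trans_eq (by simp)

theorem card_sampleAvg_deviation_le {A : Finset V} (hA : A.Nonempty) {f : V → ℝ}
    (hf : ∀ x, f x ∈ Set.Icc 0 1) {k : ℕ} (hk : 1 ≤ k) {ε : ℝ} (hε : 0 ≤ ε) (x : V) :
    (({p ∈ Fintype.piFinset fun _ : Fin k => A |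
        ε < |sampleAvg f p x - translateAvg A f x|}).card : ℝ) ≤
      2 * ((A.card : ℝ) ^ k * Real.exp (-(k * ε ^ 2 / 2))) := by
  classical
  have hA₀ : (0 : ℝ) < A.card := by exact_mod_cast hA.card_pos
  have : (0 : ℝ) < k := by exact_mod_cast hk
  set c : V → ℝ := fun a => f (x + a) - translateAvg A f x with hc
  have c_sum : ∑ a ∈ A, c a = 0 := by
    rw [Finset.sum_sub_distrib, Finset.sum_const, nsmul_eq_mul, translateAvg,
      mul_div_cancel₀ _ hA₀.ne', sub_self]
  have c_abs (a : V) : |c a| ≤ 1 :=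
    abs_sub_le_of_le_of_le (hf _).1 (hf _).2 (translateAvg_mem_Icc hf x).1
      (translateAvg_mem_Icc hf x).2 |>.trans_eq (sub_zero 1)
  have sum_sample (p : Fin k → V) :
      ∑ i, c (p i) = k * (sampleAvg f p x - translateAvg A f x) := by
    rw [hc, Finset.sum_sub_distrib, Finset.sum_const, Finset.card_univ, Fintype.card_fin,
      nsmul_eq_mul, sampleAvg]
    field_simp
  have upper := hoeffding_card (fun a _ => c_abs a) c_sum k hε
  have lower := hoeffding_card (c := fun a => -c a) (fun a _ => (abs_neg _).trans_le (c_abs a))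
    (by rw [Finset.sum_neg_distrib, c_sum, neg_zero]) k hε
  refine (Nat.cast_le.2 (Finset.card_le_card fun p hp => ?_)).trans
    ((Nat.cast_le.2 (Finset.card_union_le _ _)).trans ?_) (b := ((
      {p ∈ Fintype.piFinset fun _ : Fin k => A | k * ε < ∑ i, c (p i)} ∪
      {p ∈ Fintype.piFinset fun _ : Fin k => A | k * ε < ∑ i, -c (p i)}).card : ℝ))
  · rw [Finset.mem_filter] at hp
    rw [Finset.mem_union, Finset.mem_filter, Finset.mem_filter, Finset.sum_neg_distrib, sum_sample,
      ← mul_neg]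
    exact (lt_abs.1 hp.2).imp (fun h => ⟨hp.1, by gcongr⟩) fun h => ⟨hp.1, by gcongr⟩
  · push_cast
    linarith

end Averages

section Deviation

variable {V : Type*} [Fintype V]

/-- The set of points where `g` and `h` differ by more than `δ`. -/
noncomputable def devSet (g h : V → ℝ) (δ : ℝ) : Finset V := {x | δ < |g x - h x|}

theorem mem_devSet {g h : V → ℝ} {δ : ℝ} {x : V} : x ∈ devSet g h δ ↔ δ < |g x - h x| := by
  simp [devSet]

theorem devSet_comm (g h : V → ℝ) (δ : ℝ) : devSet g h δ = devSet h g δ := by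
  simp [devSet, abs_sub_comm]

theorem card_devSet_triangle (f g h : V → ℝ) (δ δ' : ℝ) :
    (devSet f h (δ + δ')).card ≤ (devSet f g δ).card + (devSet g h δ').card := by
  classical
  refine (Finset.card_le_card fun x hx => ?_).trans (Finset.card_union_le _ _)
  rw [Finset.mem_union, mem_devSet, mem_devSet]
  rw [mem_devSet] at hx
  by_contra! hle
  linarith [abs_sub_le (f x) (g x) (h x)]

variable [AddCommGroup V]

theorem card_devSet_comp_add (g h : V → ℝ) (δ : ℝ) (s : V) :
    (devSet (fun x => g (x + s)) (fun x => h (x + s)) δ).card = (devSet g h δ).card :=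
  Finset.card_equiv (Equiv.addRight s) fun x => by simp [mem_devSet]

theorem half_pow_le_card_good_samples {A : Finset V} (hA : A.Nonempty) {f : V → ℝ}
    (hf : ∀ x, f x ∈ Set.Icc 0 1) {k : ℕ} (hk : 1 ≤ k) {ε : ℝ} (hε : 0 < ε)
    (hkε : 4 * Real.exp (-(k * ε ^ 2 / 2)) * Fintype.card V ≤ ε * A.card) :
    (A.card : ℝ) ^ k / 2 ≤ ({p ∈ Fintype.piFinset fun _ : Fin k => A |
      ((devSet (sampleAvg f p) (translateAvg A f) ε).card : ℝ) ≤ ε * A.card}).card := by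
  set P := Fintype.piFinset fun _ : Fin k => A with hP
  set bad := fun p : Fin k → V => devSet (sampleAvg f p) (translateAvg A f) ε with hbad
  have hA₀ : (0 : ℝ) < A.card := by exact_mod_cast hA.card_pos
  have hPcard : (P.card : ℝ) = (A.card : ℝ) ^ k := by simp [hP]
  have sum_bad : ∑ p ∈ P, ((bad p).card : ℝ) ≤ (A.card : ℝ) ^ k / 2 * (ε * A.card) := by
    calc ∑ p ∈ P, ((bad p).card : ℝ) =
        ∑ x : V, (({p ∈ P | ε < |sampleAvg f p x - translateAvg A f x|}).card : ℝ) := by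
          simp only [hbad, devSet, Finset.card_filter]
          push_cast
          rw [Finset.sum_comm]
      _ ≤ ∑ x : V, 2 * ((A.card : ℝ) ^ k * Real.exp (-(k * ε ^ 2 / 2))) :=
          Finset.sum_le_sum fun x _ => card_sampleAvg_deviation_le hA hf hk hε.le x
      _ = (A.card : ℝ) ^ k / 2 * (4 * Real.exp (-(k * ε ^ 2 / 2)) * Fintype.card V) := by
          rw [Finset.sum_const, Finset.card_univ, nsmul_eq_mul]
          ring
      _ ≤ _ := by gcongr
  set Q := {p ∈ P | ¬ ((bad p).card : ℝ) ≤ ε * A.card} with hQ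
  have markov : (Q.card : ℝ) * (ε * A.card) ≤ ∑ p ∈ P, ((bad p).card : ℝ) := by
    rw [← nsmul_eq_mul]
    refine (Finset.card_nsmul_le_sum Q _ _ fun p hp => ?_).trans
      (Finset.sum_le_sum_of_subset_of_nonneg (Finset.filter_subset _ _) fun _ _ _ => by positivity)
    exact (not_le.1 (Finset.mem_filter.1 hp).2).le
  have hQcard : (Q.card : ℝ) ≤ (A.card : ℝ) ^ k / 2 :=
    le_of_mul_le_mul_right (markov.trans sum_bad) (by positivity)
  have partition : (({p ∈ P | ((bad p).card : ℝ) ≤ ε * A.card}).card : ℝ) + Q.card =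
      (A.card : ℝ) ^ k := by
    rw [← hPcard]
    exact_mod_cast Finset.card_filter_add_card_filter_not _
  linarith

open Classical in
theorem exists_card_diagonal_translates_ge (k : ℕ) (T : Finset (Fin k → V)) :
    ∃ b : Fin k → V, (Fintype.card V * T.card : ℝ) / (Fintype.card V : ℝ) ^ k ≤
      ({t | (fun i => b i + t) ∈ T} : Finset V).card := by
  have sum_translates : ∑ b : Fin k → V, ((({t | (fun i => b i + t) ∈ T} : Finset V).card : ℝ)) =
      Fintype.card V * T.card := by
    have fix_translation (t : V) :
        ∑ b : Fin k → V, (if (fun i => b i + t) ∈ T then (1 : ℝ) else 0) = T.card :=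
      (sum_add_right (fun b => if b ∈ T then (1 : ℝ) else 0) fun _ : Fin k => t).trans (by simp)
    simp only [Finset.card_filter]
    push_cast
    rw [Finset.sum_comm, Finset.sum_congr rfl fun t _ => fix_translation t, Finset.sum_const,
      Finset.card_univ, nsmul_eq_mul]
  have : (0 : ℝ) < Fintype.card V := card_pos_real
  obtain ⟨b, -, hb⟩ := Finset.exists_le_of_sum_le (Finset.univ_nonempty (α := Fin k → V))
    (f := fun _ => (Fintype.card V * T.card : ℝ) / (Fintype.card V : ℝ) ^ k)
    (g := fun b => ((({t | (fun i => b i + t) ∈ T} : Finset V).card : ℝ))) (by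
      rw [sum_translates, Finset.sum_const, Finset.card_univ, Fintype.card_fun, nsmul_eq_mul,
        Fintype.card_fin, Nat.cast_pow, mul_div_cancel₀ _ (by positivity)])
  exact ⟨b, hb⟩

theorem card_devSet_sum_le {h : V → ℝ} {D : Set V} {δ η : ℝ}
    (hD : ∀ s ∈ D, ((devSet (fun x => h (x + s)) h δ).card : ℝ) ≤ η) {ℓ : ℕ} {s : Fin ℓ → V}
    (hs : ∀ i, s i ∈ D) :
    ((devSet (fun x => h (x + ∑ i, s i)) h (ℓ * δ)).card : ℝ) ≤ ℓ * η := by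
  induction ℓ with
  | zero => simp [devSet]
  | succ ℓ ih =>
    have tail := ih fun i => hs i.succ
    rw [← card_devSet_comp_add _ _ _ (s 0)] at tail
    have triangle := card_devSet_triangle (fun x => h (x + s 0 + ∑ i, s (Fin.succ i)))
      (fun x => h (x + s 0)) h (ℓ * δ) δ
    simp only [add_assoc, ← Fin.sum_univ_succ] at triangle tail
    have := hD _ (hs 0)
    have : (_ : ℝ) ≤ _ := Nat.cast_le.2 triangle
    push_cast at this ⊢
    rw [add_one_mul (ℓ : ℝ) δ]
    linarith

variable [Module (ZMod 2) V]

/- The Croot–Sisask argument: some tuple `b` of sampling points has many translates by constants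
that are good samples of `A`, and the sums of two such constants are almost-periods. -/
theorem exists_almost_periods {A : Finset V} (hA : A.Nonempty) {f : V → ℝ}
    (hf : ∀ x, f x ∈ Set.Icc 0 1) {k : ℕ} (hk : 1 ≤ k) {ε : ℝ} (hε : 0 < ε)
    (hkε : 4 * Real.exp (-(k * ε ^ 2 / 2)) * Fintype.card V ≤ ε * A.card) :
    ∃ X : Finset V, 1 / 2 * Fintype.card V * ((A.card : ℝ) / Fintype.card V) ^ k ≤ X.card ∧
      ∀ t ∈ X, ∀ t' ∈ X, ((devSet (fun x => translateAvg A f (x + (t + t'))) (translateAvg A f)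
        (2 * ε)).card : ℝ) ≤ 2 * ε * A.card := by
  classical
  set T := {p ∈ Fintype.piFinset fun _ : Fin k => A |
    ((devSet (sampleAvg f p) (translateAvg A f) ε).card : ℝ) ≤ ε * A.card}
  have hT := half_pow_le_card_good_samples hA hf hk hε hkε
  obtain ⟨b, hb⟩ := exists_card_diagonal_translates_ge k T
  refine ⟨({t | (fun i => b i + t) ∈ T} : Finset V), le_trans ?_ hb, fun t ht t' ht' => ?_⟩
  · rw [div_pow, ← mul_div_assoc]
    have : (0 : ℝ) < Fintype.card V := card_pos_real
    refine div_le_div_of_nonneg_right ?_ (by positivity)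
    nlinarith
  have sampleAvg_translate (t : V) :
      sampleAvg f (fun i => b i + t) = fun x => sampleAvg f b (x + t) := by
    funext x
    simp only [sampleAvg, add_assoc, add_comm t]
  have good {t : V} (ht : t ∈ ({t | (fun i => b i + t) ∈ T} : Finset V)) :
      ((devSet (translateAvg A f) (fun x => sampleAvg f b (x + t)) ε).card : ℝ) ≤ ε * A.card := by
    have := (Finset.mem_filter.1 (Finset.mem_filter.1 ht).2).2
    rwa [sampleAvg_translate, devSet_comm] at this
  have shifted := good ht
  rw [← card_devSet_comp_add _ _ _ (t + t')] at shifted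
  have cancel (x : V) : x + (t + t') + t = x + t' := by grind [ZModModule.add_self t]
  simp only [cancel] at shifted
  have near := good ht'
  rw [devSet_comm] at near
  have triangle : (_ : ℝ) ≤ _ := Nat.cast_le.2 <| card_devSet_triangle
    (fun x => translateAvg A f (x + (t + t'))) (fun x => sampleAvg f b (x + t'))
    (translateAvg A f) ε ε
  rw [two_mul ε]
  push_cast at triangle
  linarith

theorem exists_pairSum_translate_ge {A : Finset V} (hA : A.Nonempty) {f : V → ℝ}
    (hf : ∀ x, f x ∈ Set.Icc 0 1) {k : ℕ} (hk : 1 ≤ k) {ε : ℝ} (hε : 0 < ε)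
    (hkε : 4 * Real.exp (-(k * ε ^ 2 / 2)) * Fintype.card V ≤ ε * A.card) (ℓ : ℕ) :
    ∃ X : Finset V, 1 / 2 * Fintype.card V * ((A.card : ℝ) / Fintype.card V) ^ k ≤ X.card ∧
      ∀ t : Fin ℓ → V × V, (∀ i, (t i).1 ∈ X ∧ (t i).2 ∈ X) →
        pairSum A f - 4 * ℓ * ε * (A.card : ℝ) ^ 2 ≤
          pairSum A fun z => f (z + ∑ i, ((t i).1 + (t i).2)) := by
  obtain ⟨X, hXcard, hX⟩ := exists_almost_periods hA hf hk hε hkε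
  refine ⟨X, hXcard, fun t ht => ?_⟩
  have hA₀ : (0 : ℝ) < A.card := by exact_mod_cast hA.card_pos
  have few_bad := card_devSet_sum_le (D := {s | ∃ t ∈ X, ∃ t' ∈ X, t + t' = s})
    (by rintro - ⟨t, ht, t', ht', rfl⟩; exact hX t ht t' ht')
    fun i => ⟨_, (ht i).1, _, (ht i).2, rfl⟩
  set σ := ∑ i, ((t i).1 + (t i).2)
  set bad := devSet (fun x => translateAvg A f (x + σ)) (translateAvg A f) (ℓ * (2 * ε)) with hbad
  have pairSum_eq (s : V) :
      pairSum A (fun z => f (z + s)) = A.card * ∑ x ∈ A, translateAvg A f (x + s) := by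
    rw [pairSum, Finset.mul_sum]
    refine Finset.sum_congr rfl fun x _ => ?_
    rw [translateAvg, mul_div_cancel₀ _ hA₀.ne']
    simp only [add_right_comm]
  have pairSum_eq_zero := pairSum_eq 0
  simp only [add_zero] at pairSum_eq_zero
  have pointwise : ∑ x ∈ A, translateAvg A f x ≤
      ∑ x ∈ A, (translateAvg A f (x + σ) + ℓ * (2 * ε) + ind bad x) := by
    refine Finset.sum_le_sum fun x _ => ?_
    by_cases hx : x ∈ bad
    · rw [ind, if_pos hx]
      have := (translateAvg_mem_Icc (A := A) hf x).2
      have := (translateAvg_mem_Icc (A := A) hf (x + σ)).1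
      have : 0 ≤ ℓ * (2 * ε) := by positivity
      linarith
    · rw [ind, if_neg hx]
      rw [hbad, mem_devSet, not_lt, abs_le] at hx
      linarith
  have sum_bad : ∑ x ∈ A, ind bad x ≤ ℓ * (2 * ε * A.card) :=
    (Finset.sum_le_univ_sum_of_nonneg (ind_nonneg bad)).trans ((sum_ind bad).trans_le few_bad)
  rw [Finset.sum_add_distrib, Finset.sum_add_distrib, Finset.sum_const, nsmul_eq_mul] at pointwise
  rw [pairSum_eq_zero, pairSum_eq]
  nlinarith

end Deviation

end Sampling

/-! ### Fourier analysis and the density increment -/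

section Fourier

variable {V : Type*} [AddCommGroup V] [Module (ZMod 2) V]

/-- The real character `(-1) ^ φ x` of `V` attached to the linear functional `φ`. -/
noncomputable def signChar (φ : Dual (ZMod 2) V) (x : V) : ℝ := if φ x = 0 then 1 else -1

/-- The Fourier coefficient at `φ` of the indicator of `A`. -/
noncomputable def charSum (A : Finset V) (φ : Dual (ZMod 2) V) : ℝ := ∑ x ∈ A, signChar φ x

/-- The large spectrum of `X`, with threshold `1 / 2`. -/
def largeSpectrum (X : Finset V) : Set (Dual (ZMod 2) V) := {φ | (X.card : ℝ) ≤ 2 * |charSum X φ|}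

theorem ite_add_eq_mul_ite (a b : ZMod 2) : (if a + b = 0 then (1 : ℝ) else -1) =
    (if a = 0 then 1 else -1) * (if b = 0 then 1 else -1) := by
  rcases zmod_two_eq_zero_or_one a with rfl | rfl <;>
    rcases zmod_two_eq_zero_or_one b with rfl | rfl <;> simp [CharTwo.add_self_eq_zero]

theorem signChar_add (φ : Dual (ZMod 2) V) (x y : V) :
    signChar φ (x + y) = signChar φ x * signChar φ y := by
  simp only [signChar, map_add, ite_add_eq_mul_ite]

theorem add_signChar (φ ψ : Dual (ZMod 2) V) (x : V) :
    signChar (φ + ψ) x = signChar φ x * signChar ψ x := by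
  simp only [signChar, LinearMap.add_apply, ite_add_eq_mul_ite]

theorem signChar_zero (φ : Dual (ZMod 2) V) : signChar φ 0 = 1 := by simp [signChar]

theorem zero_signChar (x : V) : signChar (0 : Dual (ZMod 2) V) x = 1 := by simp [signChar]

theorem signChar_eq_one_or (φ : Dual (ZMod 2) V) (x : V) :
    signChar φ x = 1 ∨ signChar φ x = -1 := by
  unfold signChar
  split_ifs <;> simp

theorem signChar_sum (φ : Dual (ZMod 2) V) {ι : Type*} (s : Finset ι) (f : ι → V) :
    signChar φ (∑ i ∈ s, f i) = ∏ i ∈ s, signChar φ (f i) := by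
  classical
  induction s using Finset.induction_on with
  | empty => simp [signChar_zero]
  | insert a s ha ih => rw [Finset.sum_insert ha, Finset.prod_insert ha, signChar_add, ih]

theorem sum_signChar {ι : Type*} (s : Finset ι) (f : ι → Dual (ZMod 2) V) (x : V) :
    signChar (∑ i ∈ s, f i) x = ∏ i ∈ s, signChar (f i) x := by
  classical
  induction s using Finset.induction_on with
  | empty => simp [zero_signChar]
  | insert a s ha ih => rw [Finset.sum_insert ha, Finset.prod_insert ha, add_signChar, ih]

theorem charSum_sq_le (A : Finset V) (φ : Dual (ZMod 2) V) :
    charSum A φ ^ 2 ≤ (A.card : ℝ) ^ 2 := by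
  have abs_signChar (x : V) : |signChar φ x| = 1 := by
    rcases signChar_eq_one_or φ x with h | h <;> simp [h]
  have abs_charSum : |charSum A φ| ≤ A.card :=
    (Finset.abs_sum_le_sum_abs _ _).trans_eq (by simp [abs_signChar])
  rw [← sq_abs]
  gcongr

open Classical in
theorem charSum_pow_le (X : Finset V) (φ : Dual (ZMod 2) V) (ℓ : ℕ) :
    (charSum X φ ^ 2) ^ ℓ ≤ ((X.card : ℝ) ^ 2) ^ ℓ *
      ((if φ ∈ span (ZMod 2) (largeSpectrum X) then 1 else 0) + (1 / 4) ^ ℓ) := by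
  split_ifs with hφ
  · have le_card : (charSum X φ ^ 2) ^ ℓ ≤ ((X.card : ℝ) ^ 2) ^ ℓ :=
      pow_le_pow_left₀ (sq_nonneg _) (charSum_sq_le X φ) ℓ
    have : (0 : ℝ) ≤ ((X.card : ℝ) ^ 2) ^ ℓ * (1 / 4) ^ ℓ := by positivity
    linarith
  · have small : 2 * |charSum X φ| < X.card := not_le.1 fun h => hφ (subset_span h)
    have sq_le : charSum X φ ^ 2 ≤ (X.card : ℝ) ^ 2 * (1 / 4) := by
      rw [← sq_abs]
      nlinarith [abs_nonneg (charSum X φ)]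
    rw [zero_add, ← mul_pow]
    gcongr

theorem charSum_sq (A : Finset V) (φ : Dual (ZMod 2) V) :
    charSum A φ ^ 2 = pairSum A (signChar φ) := by
  rw [sq, charSum, Finset.sum_mul_sum]
  simp only [pairSum, signChar_add]

theorem sum_pairSum_signChar (A X : Finset V) (φ : Dual (ZMod 2) V) (ℓ : ℕ) :
    ∑ t ∈ Fintype.piFinset (fun _ : Fin ℓ => X ×ˢ X),
      pairSum A (fun z => signChar φ (z + ∑ i, ((t i).1 + (t i).2))) =
        charSum A φ ^ 2 * (charSum X φ ^ 2) ^ ℓ := by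
  have factor (t : Fin ℓ → V × V) :
      pairSum A (fun z => signChar φ (z + ∑ i, ((t i).1 + (t i).2))) =
        charSum A φ ^ 2 * ∏ i, signChar φ ((t i).1 + (t i).2) := by
    simp only [pairSum, signChar_add φ _ (∑ _i, _), ← Finset.sum_mul, charSum_sq, signChar_sum]
  simp only [factor, ← Finset.mul_sum]
  rw [charSum_sq X, pairSum, ← Finset.sum_product', Finset.sum_pow']

variable [Fintype V]

open Classical in
noncomputable instance instFintypeDual : Fintype (Dual (ZMod 2) V) :=
  Fintype.ofInjective (fun φ => (φ : V → ZMod 2)) DFunLike.coe_injective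

theorem sum_signChar_eq_zero {φ : Dual (ZMod 2) V} (hφ : φ ≠ 0) : ∑ x, signChar φ x = 0 := by
  obtain ⟨y, hy⟩ : ∃ y, φ y ≠ 0 := by
    by_contra! hzero
    exact hφ (LinearMap.ext hzero)
  have shift := sum_add_right (signChar φ) y
  simp only [signChar_add, ← Finset.sum_mul, show signChar φ y = -1 from if_neg hy] at shift
  linarith

open Classical in
theorem sum_submodule_signChar (Y : Submodule (ZMod 2) (Dual (ZMod 2) V)) (x : V) :
    ∑ φ with φ ∈ Y, signChar φ x = if x ∈ Y.dualCoannihilator then (Nat.card Y : ℝ) else 0 := by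
  split_ifs with hx
  · have signChar_eq_one : ∀ φ ∈ Finset.univ.filter (· ∈ Y), signChar φ x = 1 := fun φ hφ =>
      if_pos ((mem_dualCoannihilator _).1 hx φ (Finset.mem_filter.1 hφ).2)
    rw [Finset.sum_congr rfl signChar_eq_one, Finset.sum_const, nsmul_eq_mul, mul_one,
      Nat.card_eq_fintype_card, Fintype.card_subtype]
  · rw [mem_dualCoannihilator] at hx
    push Not at hx
    obtain ⟨ψ, hψ, hψx⟩ := hx
    have shift : ∑ φ with φ ∈ Y, signChar (φ + ψ) x = ∑ φ with φ ∈ Y, signChar φ x :=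
      Finset.sum_equiv (Equiv.addRight ψ)
        (fun φ => by simp [Submodule.add_mem_iff_left Y hψ]) fun _ _ => rfl
    simp only [add_signChar, ← Finset.sum_mul, show signChar ψ x = -1 from if_neg hψx] at shift
    linarith

theorem card_mul_card_dualCoannihilator (Y : Submodule (ZMod 2) (Dual (ZMod 2) V)) :
    Nat.card Y * Nat.card Y.dualCoannihilator = Fintype.card V := by
  rw [← Nat.card_eq_fintype_card, natCard_eq_pow_finrank (K := ZMod 2) (V := V),
    natCard_eq_pow_finrank (K := ZMod 2) (V := Y),
    natCard_eq_pow_finrank (K := ZMod 2) (V := Y.dualCoannihilator),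
    ← Subspace.finrank_add_finrank_dualCoannihilator_eq Y, pow_add]

open Classical in
theorem sum_dual_signChar (x : V) :
    ∑ φ : Dual (ZMod 2) V, signChar φ x = if x = 0 then (Fintype.card V : ℝ) else 0 := by
  have hcard := card_mul_card_dualCoannihilator (⊤ : Submodule (ZMod 2) (Dual (ZMod 2) V))
  have htop := sum_submodule_signChar (⊤ : Submodule (ZMod 2) (Dual (ZMod 2) V)) x
  rw [dualCoannihilator_top, Nat.card_unique (α := (⊥ : Submodule (ZMod 2) V)), mul_one] at hcard
  simpa [← hcard] using htop

theorem card_mul_autocorr_ind (A : Finset V) (z : V) :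
    Fintype.card V * autocorr (ind A) z = ∑ φ, charSum A φ ^ 2 * signChar φ z := by
  classical
  have inversion (x : V) : ∑ φ : Dual (ZMod 2) V, ∑ y ∈ A, signChar φ (x + y + z) =
      Fintype.card V * ind A (x + z) := by
    have eq_zero_iff (y : V) : x + y + z = 0 ↔ y = x + z := by
      rw [add_right_comm, add_eq_zero_iff_eq, eq_comm]
    rw [Finset.sum_comm]
    simp only [sum_dual_signChar, eq_zero_iff]
    rw [Finset.sum_ite_eq']
    simp [ind]
  have autocorr_eq : autocorr (ind A) z = ∑ x ∈ A, ind A (x + z) := by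
    rw [← sum_mul_ind]
    exact Finset.sum_congr rfl fun _ _ => mul_comm _ _
  simp only [charSum_sq, pairSum, Finset.sum_mul, ← signChar_add]
  rw [Finset.sum_comm, Finset.sum_congr rfl fun x _ => inversion x, ← Finset.mul_sum,
    autocorr_eq]

theorem sum_charSum_sq (A : Finset V) : ∑ φ, charSum A φ ^ 2 = Fintype.card V * A.card := by
  have inversion := card_mul_autocorr_ind A 0
  simp only [signChar_zero, mul_one, autocorr, add_zero, sum_mul_ind] at inversion
  rw [← inversion]
  simp [ind]

theorem sum_riesz_product {ι : Type*} [Fintype ι] {g : ι → Dual (ZMod 2) V}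
    (hg : LinearIndependent (ZMod 2) g) (e : ι → ℝ) :
    ∑ x, ∏ i, (1 + e i * signChar (g i) x) = Fintype.card V := by
  simp only [Finset.prod_one_add]
  rw [Finset.sum_comm, Finset.sum_eq_single ∅]
  · simp
  · intro t _ ht
    obtain ⟨i, hi⟩ := Finset.nonempty_iff_ne_empty.2 ht
    have sum_ne_zero : ∑ i ∈ t, g i ≠ 0 := fun h =>
      one_ne_zero (linearIndependent_iff'.1 hg t (fun _ => 1) (by simpa using h) i hi)
    simp only [Finset.prod_mul_distrib, ← Finset.mul_sum, ← sum_signChar]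
    rw [sum_signChar_eq_zero sum_ne_zero, mul_zero]
  · simp

theorem exp_half_sub_le {t : ℝ} (ht : t = 1 ∨ t = -1) :
    Real.exp (t / 2 - 1 / 5) ≤ 1 + 1 / 2 * t := by
  rcases ht with rfl | rfl
  · have tangent := Real.add_one_le_exp (-(3 / 10 : ℝ))
    have inverse : Real.exp (3 / 10) * Real.exp (-(3 / 10)) = 1 := by
      rw [← Real.exp_add, add_neg_cancel, Real.exp_zero]
    have positive := Real.exp_pos (3 / 10)
    norm_num
    nlinarith
  · have le_exp_log : Real.exp (-(7 / 10)) ≤ Real.exp (-Real.log 2) :=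
      Real.exp_le_exp.2 (by linarith [Real.log_two_lt_d9])
    rw [Real.exp_neg (Real.log 2), Real.exp_log (by norm_num)] at le_exp_log
    norm_num at le_exp_log ⊢
    exact le_exp_log

theorem sum_exp_signChar_le {ι : Type*} [Fintype ι] {g : ι → Dual (ZMod 2) V}
    (hg : LinearIndependent (ZMod 2) g) {e : ι → ℝ} (he : ∀ i, e i = 1 ∨ e i = -1) :
    ∑ x, Real.exp (∑ i, (e i * signChar (g i) x / 2 - 1 / 5)) ≤ Fintype.card V := by
  rw [← sum_riesz_product hg fun i => 1 / 2 * e i]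
  refine Finset.sum_le_sum fun x _ => ?_
  rw [Real.exp_sum]
  refine Finset.prod_le_prod (fun i _ => (Real.exp_pos _).le) fun i _ => ?_
  rw [mul_assoc]
  refine exp_half_sub_le ?_
  rcases he i with h | h <;> rcases signChar_eq_one_or (g i) x with h' | h' <;> simp [h, h']

theorem card_mul_exp_le_sum_exp {α : Type*} {s : Finset α} {y : α → ℝ} {m : ℝ}
    (h : s.card * m ≤ ∑ x ∈ s, y x) : s.card * Real.exp m ≤ ∑ x ∈ s, Real.exp (y x) := by
  have tangent : ∀ x ∈ s, Real.exp m * (1 + (y x - m)) ≤ Real.exp (y x) := fun x _ => by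
    rw [← add_sub_cancel m (y x), Real.exp_add, add_sub_cancel]
    gcongr
    linarith [Real.add_one_le_exp (y x - m)]
  refine le_trans ?_ (Finset.sum_le_sum tangent)
  rw [← Finset.mul_sum, Finset.sum_add_distrib, Finset.sum_sub_distrib, Finset.sum_const,
    Finset.sum_const, nsmul_eq_mul, nsmul_eq_mul]
  have := Real.exp_pos m
  nlinarith

theorem card_mul_exp_le_of_linearIndependent {ι : Type*} [Fintype ι] {X : Finset V}
    {g : ι → Dual (ZMod 2) V} (hg : LinearIndependent (ZMod 2) g)
    (hgX : ∀ i, g i ∈ largeSpectrum X) :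
    (X.card : ℝ) * Real.exp (Fintype.card ι / 20) ≤ Fintype.card V := by
  set e : ι → ℝ := fun i => if 0 ≤ charSum X (g i) then 1 else -1 with he
  have sign (i : ι) : e i = 1 ∨ e i = -1 := by
    simp only [he]
    split_ifs <;> simp
  have mul_charSum (i : ι) : e i * charSum X (g i) = |charSum X (g i)| := by
    simp only [he]
    split_ifs with h
    · rw [abs_of_nonneg h, one_mul]
    · rw [abs_of_neg (not_le.1 h), neg_one_mul]
  have mean_ge : (X.card : ℝ) * (Fintype.card ι / 20) ≤
      ∑ x ∈ X, ∑ i, (e i * signChar (g i) x / 2 - 1 / 5) := by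
    rw [Finset.sum_comm, mul_div_left_comm, ← nsmul_eq_mul, ← Finset.card_univ]
    refine Finset.card_nsmul_le_sum _ _ _ fun i _ => ?_
    rw [Finset.sum_sub_distrib, Finset.sum_const, nsmul_eq_mul, ← Finset.sum_div,
      ← Finset.mul_sum, ← charSum, mul_charSum]
    have : (X.card : ℝ) ≤ 2 * |charSum X (g i)| := hgX i
    linarith
  exact (card_mul_exp_le_sum_exp mean_ge).trans <|
    (Finset.sum_le_univ_sum_of_nonneg fun _ => (Real.exp_pos _).le).trans
      (sum_exp_signChar_le hg sign)

theorem chang (X : Finset V) :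
    (X.card : ℝ) * Real.exp (finrank (ZMod 2) (span (ZMod 2) (largeSpectrum X)) / 20) ≤
      Fintype.card V := by
  obtain ⟨g, hgX, -, hg⟩ := exists_fun_fin_finrank_span_eq (ZMod 2) (largeSpectrum X)
  simpa using card_mul_exp_le_of_linearIndependent hg hgX

end Fourier

section DensityIncrement

variable {V : Type*} [AddCommGroup V] [Module (ZMod 2) V]

open Classical in
theorem card_filter_add_mem (A : Finset V) (W : Submodule (ZMod 2) V) (x : V) :
    (A.filter (x + · ∈ W)).card = Nat.card {w : W // x + w ∈ A} := by
  have add_add_cancel (y : V) : x + (x + y) = y := by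
    rw [← add_assoc, ZModModule.add_self, zero_add]
  rw [← Fintype.card_coe, ← Nat.card_eq_fintype_card]
  exact Nat.card_congr
    { toFun y := ⟨⟨x + y, (Finset.mem_filter.1 y.2).2⟩,
        by simpa [add_add_cancel] using (Finset.mem_filter.1 y.2).1⟩
      invFun w := ⟨x + w, by simp [add_add_cancel, w.2]⟩
      left_inv y := Subtype.ext (add_add_cancel y)
      right_inv w := Subtype.ext (Subtype.ext (add_add_cancel w)) }

variable [Fintype V]

theorem normAutocorr_eq_sum (A : Finset V) (z : V) :
    normAutocorr A z = ∑ φ, charSum A φ ^ 2 / (A.card : ℝ) ^ 2 * signChar φ z := by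
  rw [normAutocorr, div_mul_eq_mul_div, card_mul_autocorr_ind, Finset.sum_div]
  exact Finset.sum_congr rfl fun φ _ => by ring

theorem pairSum_normAutocorr_add (A A' : Finset V) (u : V) :
    pairSum A' (fun z => normAutocorr A (z + u)) =
      ∑ φ, charSum A φ ^ 2 / (A.card : ℝ) ^ 2 * pairSum A' fun z => signChar φ (z + u) := by
  simp only [pairSum, normAutocorr_eq_sum, Finset.mul_sum]
  rw [Finset.sum_comm (s := Finset.univ)]
  exact Finset.sum_congr rfl fun x _ => Finset.sum_comm

theorem sum_pairSum_normAutocorr (A A' X : Finset V) (ℓ : ℕ) :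
    ∑ t ∈ Fintype.piFinset (fun _ : Fin ℓ => X ×ˢ X),
      pairSum A' (fun z => normAutocorr A (z + ∑ i, ((t i).1 + (t i).2))) =
        ∑ φ, charSum A φ ^ 2 / (A.card : ℝ) ^ 2 * (charSum A' φ ^ 2 * (charSum X φ ^ 2) ^ ℓ) := by
  simp only [pairSum_normAutocorr_add, ← sum_pairSum_signChar, Finset.mul_sum]
  exact Finset.sum_comm

open Classical in
theorem sum_charSum_mul_pow_le (A A' X : Finset V) (ℓ : ℕ) :
    ∑ φ, charSum A φ ^ 2 / (A.card : ℝ) ^ 2 * (charSum A' φ ^ 2 * (charSum X φ ^ 2) ^ ℓ) ≤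
      ((X.card : ℝ) ^ 2) ^ ℓ * (A'.card : ℝ) ^ 2 / (A.card : ℝ) ^ 2 *
        (∑ φ with φ ∈ span (ZMod 2) (largeSpectrum X), charSum A φ ^ 2 +
          Fintype.card V * A.card * (1 / 4) ^ ℓ) := by
  rw [← sum_charSum_sq, Finset.sum_filter, Finset.sum_mul, ← Finset.sum_add_distrib,
    Finset.mul_sum]
  refine Finset.sum_le_sum fun φ _ => ?_
  calc charSum A φ ^ 2 / (A.card : ℝ) ^ 2 * (charSum A' φ ^ 2 * (charSum X φ ^ 2) ^ ℓ)
      ≤ charSum A φ ^ 2 / (A.card : ℝ) ^ 2 * ((A'.card : ℝ) ^ 2 * (((X.card : ℝ) ^ 2) ^ ℓ *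
          ((if φ ∈ span (ZMod 2) (largeSpectrum X) then 1 else 0) + (1 / 4) ^ ℓ))) := by
        gcongr ?_ * (?_ * ?_)
        exacts [charSum_sq_le A' φ, charSum_pow_le X φ ℓ]
    _ = _ := by split_ifs <;> ring

open Classical in
theorem spectral_mass_ge {A A' X : Finset V} (hA : A.Nonempty) (hA' : A'.Nonempty)
    (hX : X.Nonempty) {d : ℕ} (hd : 4 ≤ d) (hAcard : (Fintype.card V : ℝ) ≤ 2 ^ d * A.card)
    (h : ∀ t : Fin d → V × V, (∀ i, (t i).1 ∈ X ∧ (t i).2 ∈ X) → 19 / 20 * (A'.card : ℝ) ^ 2 ≤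
      pairSum A' fun z =>
        if 5 / 4 ≤ normAutocorr A (z + ∑ i, ((t i).1 + (t i).2)) then 1 else 0) :
    9 / 8 * (A.card : ℝ) ^ 2 ≤
      ∑ φ with φ ∈ span (ZMod 2) (largeSpectrum X), charSum A φ ^ 2 := by
  have : (0 : ℝ) < A.card := by exact_mod_cast hA.card_pos
  have : (0 : ℝ) < A'.card := by exact_mod_cast hA'.card_pos
  have : (0 : ℝ) < X.card := by exact_mod_cast hX.card_pos
  have translate_ge : ∀ t ∈ Fintype.piFinset (fun _ : Fin d => X ×ˢ X),
      19 / 16 * (A'.card : ℝ) ^ 2 ≤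
        pairSum A' (fun z => normAutocorr A (z + ∑ i, ((t i).1 + (t i).2))) := fun t ht => by
    have := h t fun i => Finset.mem_product.1 (Fintype.mem_piFinset.1 ht i)
    linarith [mul_pairSum_ite_le A A' (∑ i, ((t i).1 + (t i).2))]
  have mass := (Finset.card_nsmul_le_sum _ _ _ translate_ge).trans
    ((sum_pairSum_normAutocorr A A' X d).trans_le (sum_charSum_mul_pow_le A A' X d))
  rw [nsmul_eq_mul, Fintype.card_piFinset] at mass
  set S := ∑ φ with φ ∈ span (ZMod 2) (largeSpectrum X), charSum A φ ^ 2
  have mass_add_error : 19 / 16 * (A.card : ℝ) ^ 2 ≤ S + Fintype.card V * A.card * (1 / 4) ^ d := by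
    have : 0 < ((X.card : ℝ) ^ 2) ^ d * (A'.card : ℝ) ^ 2 / (A.card : ℝ) ^ 2 := by positivity
    refine le_of_mul_le_mul_left (Eq.trans_le ?_ mass) this
    simp only [Finset.card_product, Finset.prod_const, Finset.card_univ, Fintype.card_fin]
    push_cast
    field_simp
  have error_le : (Fintype.card V : ℝ) * A.card * (1 / 4) ^ d ≤ 1 / 16 * (A.card : ℝ) ^ 2 :=
    calc (Fintype.card V : ℝ) * A.card * (1 / 4) ^ d
        ≤ (2 ^ d * A.card) * A.card * (1 / 4) ^ d := by gcongr
      _ = (A.card : ℝ) ^ 2 * (2 * (1 / 4)) ^ d := by rw [mul_pow]; ring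
      _ ≤ (A.card : ℝ) ^ 2 * (2 * (1 / 4)) ^ 4 := by
        gcongr ?_ * ?_
        exact pow_le_pow_of_le_one (by norm_num) (by norm_num) hd
      _ = 1 / 16 * (A.card : ℝ) ^ 2 := by ring
  linarith

open Classical in
theorem sum_submodule_charSum_sq (A : Finset V) (Y : Submodule (ZMod 2) (Dual (ZMod 2) V)) :
    ∑ φ with φ ∈ Y, charSum A φ ^ 2 =
      ∑ x ∈ A, (Nat.card Y : ℝ) * (A.filter (x + · ∈ Y.dualCoannihilator)).card := by
  simp only [charSum_sq, pairSum]
  rw [Finset.sum_comm]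
  refine Finset.sum_congr rfl fun x _ => ?_
  rw [Finset.sum_comm]
  simp only [sum_submodule_signChar]
  rw [← Finset.sum_filter, Finset.sum_const, nsmul_eq_mul, mul_comm]

open Classical in
theorem exists_coset_density_increment {A : Finset V} (hA : A.Nonempty)
    {Y : Submodule (ZMod 2) (Dual (ZMod 2) V)}
    (h : 9 / 8 * (A.card : ℝ) ^ 2 ≤ ∑ φ with φ ∈ Y, charSum A φ ^ 2) :
    ∃ x : V, 9 / 8 * (A.card : ℝ) * Nat.card Y.dualCoannihilator ≤
      Nat.card {w : Y.dualCoannihilator // x + w ∈ A} * Fintype.card V := by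
  rw [sum_submodule_charSum_sq] at h
  obtain ⟨x, -, hx⟩ : ∃ x ∈ A, 9 / 8 * (A.card : ℝ) ≤
      (Nat.card Y : ℝ) * (A.filter (x + · ∈ Y.dualCoannihilator)).card := by
    refine Finset.exists_le_of_sum_le hA ?_
    rw [Finset.sum_const, nsmul_eq_mul]
    linarith
  refine ⟨x, ?_⟩
  rw [← card_filter_add_mem, ← card_mul_card_dualCoannihilator Y]
  push_cast
  linarith [mul_le_mul_of_nonneg_right hx (Nat.cast_nonneg (Nat.card Y.dualCoannihilator))]

end DensityIncrement

section Parameters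

theorem le_two_pow_mul_of_half_mul_pow_le {M a b : ℝ} (hM : 0 < M) {e k : ℕ}
    (hMa : M ≤ 2 ^ e * a) (hb : 1 / 2 * M * (a / M) ^ k ≤ b) : M ≤ 2 ^ (e * k + 1) * b := by
  have one_le : 1 ≤ 2 ^ (e * k) * (a / M) ^ k := by
    rw [pow_mul, ← mul_pow]
    refine one_le_pow₀ ?_
    rwa [← mul_div_assoc, one_le_div hM]
  calc M = M * 1 := (mul_one M).symm
    _ ≤ M * (2 ^ (e * k) * (a / M) ^ k) := by gcongr
    _ = 2 ^ (e * k + 1) * (1 / 2 * M * (a / M) ^ k) := by ring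
    _ ≤ 2 ^ (e * k + 1) * b := by gcongr

theorem exp_neg_six_mul_two_pow_le_one (d : ℕ) :
    Real.exp (-(6 * (d : ℝ) ^ 2)) * 2 ^ (8 * d ^ 2) ≤ 1 := by
  have two_pow_le : (2 : ℝ) ^ 8 ≤ Real.exp 6 :=
    calc (2 : ℝ) ^ 8 ≤ 2.7 ^ 6 := by norm_num
      _ ≤ Real.exp 1 ^ 6 := by gcongr; linarith [Real.exp_one_gt_d9]
      _ = Real.exp 6 := by rw [← Real.exp_nat_mul]; norm_num
  have exp_eq : Real.exp (6 * (d : ℝ) ^ 2) = Real.exp 6 ^ (d ^ 2) := by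
    rw [← Real.exp_nat_mul]
    push_cast
    ring_nf
  rw [Real.exp_neg, inv_mul_le_iff₀ (Real.exp_pos _), mul_one, exp_eq, pow_mul]
  gcongr

theorem exp_neg_six_mul_le_div {d : ℕ} (hd : 4 ≤ d) {M a : ℝ} (ha : 0 ≤ a)
    (hM : M ≤ 2 ^ (5 * d ^ 2) * a) :
    4 * Real.exp (-(6 * (d : ℝ) ^ 2)) * M ≤ 1 / (160 * d) * a := by
  have linear_le : (640 * d : ℝ) ≤ 2 ^ (3 * d ^ 2) := by
    have : 640 * d ≤ 2 ^ (3 * d ^ 2) :=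
      calc 640 * d ≤ 2 ^ 10 * 2 ^ d := Nat.mul_le_mul (by norm_num) Nat.lt_two_pow_self.le
        _ = 2 ^ (10 + d) := (pow_add 2 10 d).symm
        _ ≤ 2 ^ (3 * d ^ 2) := Nat.pow_le_pow_right two_pos (by nlinarith)
    exact_mod_cast this
  have : (0 : ℝ) < d := by exact_mod_cast (by omega : 0 < d)
  rw [one_div_mul_eq_div, le_div_iff₀ (by positivity)]
  calc 4 * Real.exp (-(6 * (d : ℝ) ^ 2)) * M * (160 * d)
      ≤ 4 * Real.exp (-(6 * (d : ℝ) ^ 2)) * (2 ^ (5 * d ^ 2) * a) * (160 * d) := by gcongr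
    _ = Real.exp (-(6 * (d : ℝ) ^ 2)) * (2 ^ (5 * d ^ 2) * (640 * d)) * a := by ring
    _ ≤ Real.exp (-(6 * (d : ℝ) ^ 2)) * (2 ^ (5 * d ^ 2) * 2 ^ (3 * d ^ 2)) * a := by gcongr
    _ = Real.exp (-(6 * (d : ℝ) ^ 2)) * 2 ^ (8 * d ^ 2) * a := by rw [← pow_add]; ring_nf
    _ ≤ 1 * a := by gcongr; exact exp_neg_six_mul_two_pow_le_one d
    _ = a := one_mul a

end Parameters

section DensityIncrement

variable {V : Type*} [AddCommGroup V] [Module (ZMod 2) V] [Fintype V]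

theorem finrank_span_largeSpectrum_le {X : Finset V} (hX : X.Nonempty) {N : ℕ}
    (h : (Fintype.card V : ℝ) ≤ 2 ^ N * X.card) :
    finrank (ZMod 2) (span (ZMod 2) (largeSpectrum X)) ≤ 20 * N := by
  have hX₀ : (0 : ℝ) < X.card := by exact_mod_cast hX.card_pos
  set D := finrank (ZMod 2) (span (ZMod 2) (largeSpectrum X))
  have exp_le : Real.exp (D / 20) ≤ 2 ^ N :=
    le_of_mul_le_mul_left ((chang X).trans (h.trans_eq (mul_comm _ _))) hX₀
  have two_pow_le : (2 : ℝ) ^ N ≤ Real.exp N := by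
    rw [← Real.exp_one_pow]
    gcongr
    linarith [Real.exp_one_gt_d9]
  have : (D : ℝ) / 20 ≤ N := Real.exp_le_exp.1 (exp_le.trans two_pow_le)
  have : (D : ℝ) ≤ 20 * N := by linarith
  exact_mod_cast this

theorem exists_large_pairSum_ge {A B : Finset V} (hA : A.Nonempty) {d : ℕ} (hd : 20 ≤ d)
    (hB : ∀ z ∈ B, autocorr (ind A) z = 0) (hBcard : (Fintype.card V : ℝ) ≤ 2 ^ d * B.card)
    (hAcard : (Fintype.card V : ℝ) ≤ 2 ^ d * A.card) :
    ∃ A' : Finset V, A'.Nonempty ∧ (Fintype.card V : ℝ) ≤ 2 ^ (5 * d ^ 2) * A'.card ∧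
      39 / 40 * (A'.card : ℝ) ^ 2 ≤
        pairSum A' fun z => if 5 / 4 ≤ normAutocorr A z then 1 else 0 := by
  have : (0 : ℝ) < A.card := by exact_mod_cast hA.card_pos
  have hV₀ : (0 : ℝ) < Fintype.card V := card_pos_real
  obtain ⟨A', hA'card, hA'pairs⟩ := sifting hA hd hB hBcard
  have hA'₀ : (0 : ℝ) < A'.card := lt_of_lt_of_le (by positivity) hA'card
  refine ⟨A', Finset.card_pos.1 (by exact_mod_cast hA'₀), ?_, ?_⟩
  · refine (le_two_pow_mul_of_half_mul_pow_le hV₀ hAcard hA'card).trans ?_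
    gcongr
    · norm_num
    · nlinarith
  · have complementary : pairSum A' (fun z => if 5 / 4 ≤ normAutocorr A z then 1 else 0) +
        pairSum A' (fun z => if 5 / 4 ≤ normAutocorr A z then 0 else 1) = (A'.card : ℝ) ^ 2 := by
      rw [← pairSum_one]
      simp only [pairSum, ← Finset.sum_add_distrib]
      refine Finset.sum_congr rfl fun x _ => Finset.sum_congr rfl fun y _ => ?_
      split_ifs <;> simp
    linarith

theorem exists_pairSum_translate_ge_of_pairSum_ge {A : Finset V} (hA : A.Nonempty) {d : ℕ}
    (hd : 4 ≤ d) (hAcard : (Fintype.card V : ℝ) ≤ 2 ^ (5 * d ^ 2) * A.card) {f : V → ℝ}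
    (hf : ∀ x, f x ∈ Set.Icc 0 1) (hAf : 39 / 40 * (A.card : ℝ) ^ 2 ≤ pairSum A f) :
    ∃ X : Finset V, X.Nonempty ∧
      (Fintype.card V : ℝ) ≤ 2 ^ (5 * d ^ 2 * (307200 * d ^ 4) + 1) * X.card ∧
      ∀ t : Fin d → V × V, (∀ i, (t i).1 ∈ X ∧ (t i).2 ∈ X) →
        19 / 20 * (A.card : ℝ) ^ 2 ≤ pairSum A fun z => f (z + ∑ i, ((t i).1 + (t i).2)) := by
  have hV₀ : (0 : ℝ) < Fintype.card V := card_pos_real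
  have hA₀ : (0 : ℝ) < A.card := by exact_mod_cast hA.card_pos
  have : 0 < d := by omega
  have exponent_eq : ((307200 * d ^ 4 : ℕ) : ℝ) * (1 / (160 * d)) ^ 2 / 2 = 6 * (d : ℝ) ^ 2 := by
    push_cast
    field_simp
    norm_num
  have error_eq : 4 * (d : ℝ) * (1 / (160 * d)) = 1 / 40 := by
    field_simp
    norm_num
  obtain ⟨X, hXcard, hXtranslate⟩ := exists_pairSum_translate_ge hA hf
    (k := 307200 * d ^ 4) (Nat.one_le_iff_ne_zero.2 (by positivity)) (ε := 1 / (160 * d))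
    (by positivity) (exponent_eq ▸ exp_neg_six_mul_le_div hd hA₀.le hAcard) d
  have hX₀ : (0 : ℝ) < X.card := lt_of_lt_of_le (by positivity) hXcard
  refine ⟨X, Finset.card_pos.1 (by exact_mod_cast hX₀),
    le_two_pow_mul_of_half_mul_pow_le hV₀ hAcard hXcard, fun t ht => ?_⟩
  have := hXtranslate t ht
  rw [error_eq] at this
  linarith

theorem density_increment {A B : Finset V} (hA : A.Nonempty) {d : ℕ} (hd : 20 ≤ d)
    (hB : ∀ z ∈ B, autocorr (ind A) z = 0) (hBcard : (Fintype.card V : ℝ) ≤ 2 ^ d * B.card)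
    (hAcard : (Fintype.card V : ℝ) ≤ 2 ^ d * A.card) :
    ∃ (W : Submodule (ZMod 2) V) (x : V),
      finrank (ZMod 2) V ≤ finrank (ZMod 2) W + 40000000 * d ^ 6 ∧
      9 / 8 * (A.card : ℝ) * Nat.card W ≤ Nat.card {w : W // x + w ∈ A} * Fintype.card V := by
  obtain ⟨A', hA', hA'card, hA'pairs⟩ := exists_large_pairSum_ge hA hd hB hBcard hAcard
  obtain ⟨X, hX, hXcard, hXtranslate⟩ := exists_pairSum_translate_ge_of_pairSum_ge hA' (by omega)
    hA'card (fun z => by split_ifs <;> simp) hA'pairs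
  obtain ⟨x, hx⟩ :=
    exists_coset_density_increment hA (spectral_mass_ge hA hA' hX (by omega) hAcard hXtranslate)
  refine ⟨_, x, ?_, hx⟩
  have codim_le := finrank_span_largeSpectrum_le hX hXcard
  have : 20 * (5 * d ^ 2 * (307200 * d ^ 4) + 1) = 30720000 * d ^ 6 + 20 := by ring
  have : 1 ≤ d ^ 6 := Nat.one_le_pow _ _ (by omega)
  rw [← Subspace.finrank_add_finrank_dualCoannihilator_eq (span (ZMod 2) (largeSpectrum X))]
  omega

end DensityIncrement

/-! ### Sum-free sets meeting every large subspace -/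

section SumFree

theorem exists_le_finrank_eq {K V : Type*} [DivisionRing K] [AddCommGroup V] [Module K V]
    {Y : Submodule K V} {n : ℕ} (h : n ≤ finrank K Y) : ∃ Z ≤ Y, finrank K Z = n := by
  obtain ⟨v, hv⟩ := exists_linearIndependent_of_le_finrank h
  refine ⟨span K (Set.range (Y.subtype ∘ v)), span_le.2 ?_, ?_⟩
  · rintro _ ⟨i, rfl⟩
    exact (v i).2
  · rw [finrank_span_eq_card (hv.map' Y.subtype Y.ker_subtype), Fintype.card_fin]

theorem card_le_add_one_mul_card_of_maximal {V : Type*} [AddCommGroup V] [Module (ZMod 2) V]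
    [Fintype V] {F : Finset V} {Y : Submodule (ZMod 2) V}
    (hY : Maximal (fun X : Submodule (ZMod 2) V => ∀ x ∈ X, x ∉ F) Y) :
    Fintype.card V ≤ (F.card + 1) * Nat.card Y := by
  classical
  -- The translates of `Y` by the points of `F` cover the complement of `Y`.
  have cover : (Finset.univ : Finset V) ⊆
      (F ×ˢ Finset.univ.filter (· ∈ Y)).image (fun p => p.1 + p.2) ∪
        Finset.univ.filter (· ∈ Y) := by
    intro v _
    by_cases hv : v ∈ Y
    · simp [hv]
    obtain ⟨w, hw, hwF⟩ : ∃ w ∈ Y ⊔ span (ZMod 2) {v}, w ∈ F := by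
      by_contra! hsup
      exact hv (hY.le_of_ge hsup le_sup_left (mem_sup_right (mem_span_singleton_self v)))
    have hwv : w + v ∈ Y :=
      (mem_sup_span_singleton.1 hw).resolve_left fun hwY => hY.prop w hwY hwF
    refine Finset.mem_union_left _ (Finset.mem_image.2 ⟨(w, w + v), ?_, ?_⟩)
    · simp [hwF, hwv]
    · rw [← add_assoc, ZModModule.add_self, zero_add]
  rw [Nat.card_eq_fintype_card, Fintype.card_subtype, add_one_mul, ← Finset.card_product]
  exact (Finset.card_le_card cover).trans
    ((Finset.card_union_le _ _).trans (Nat.add_le_add_right Finset.card_image_le _))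

theorem card_le_two_pow_mul_card {V : Type*} [AddCommGroup V] [Module (ZMod 2) V] [Fintype V]
    {F : Finset V} (hF : 0 ∉ F) {d : ℕ} (hd : d ≤ finrank (ZMod 2) V)
    (hmeet : ∀ Y : Submodule (ZMod 2) V, finrank (ZMod 2) Y = d → ∃ y ∈ Y, y ∈ F) :
    Fintype.card V ≤ 2 ^ d * F.card := by
  have meets_of_le (Y : Submodule (ZMod 2) V) (hY : d ≤ finrank (ZMod 2) Y) : ∃ y ∈ Y, y ∈ F := by
    obtain ⟨Z, hZY, hZ⟩ := exists_le_finrank_eq hY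
    exact (hmeet Z hZ).imp fun y hy => ⟨hZY hy.1, hy.2⟩
  obtain ⟨Y, hYmax⟩ := exists_maximal_of_wellFoundedGT
    (fun Y : Submodule (ZMod 2) V => ∀ y ∈ Y, y ∉ F)
    ⟨⊥, fun y hy => by rwa [(mem_bot _).1 hy]⟩
  have finrank_lt : finrank (ZMod 2) Y < d := by
    by_contra! hdY
    obtain ⟨y, hy, hyF⟩ := meets_of_le Y hdY
    exact hYmax.prop y hy hyF
  have card_Y : Nat.card Y ≤ 2 ^ (d - 1) := by
    rw [natCard_eq_pow_finrank (K := ZMod 2) (V := Y), Nat.card_zmod]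
    exact Nat.pow_le_pow_right two_pos (by omega)
  have card_F : 1 ≤ F.card := by
    obtain ⟨y, -, hy⟩ := meets_of_le ⊤ (by rwa [finrank_top])
    exact Finset.card_pos.2 ⟨y, hy⟩
  calc Fintype.card V ≤ (F.card + 1) * Nat.card Y := card_le_add_one_mul_card_of_maximal hYmax
    _ ≤ (2 * F.card) * 2 ^ (d - 1) := Nat.mul_le_mul (by omega) card_Y
    _ = 2 ^ (d - 1 + 1) * F.card := by ring
    _ = 2 ^ d * F.card := by rw [Nat.sub_add_cancel (by omega)]

theorem autocorr_ind_eq_zero {V : Type*} [AddCommGroup V] [Module (ZMod 2) V] [Fintype V]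
    {A B : Finset V} (hAB : ∀ x ∈ A, ∀ y ∈ A, x + y ∉ B) {z : V} (hz : z ∈ B) :
    autocorr (ind A) z = 0 := by
  refine Finset.sum_eq_zero fun x _ => ?_
  by_contra hne
  have hx : x ∈ A := by
    by_contra hx
    simp [ind, hx] at hne
  have hxz : x + z ∈ A := by
    by_contra hxz
    simp [ind, hxz] at hne
  have cancel : x + (x + z) = z := by rw [← add_assoc, ZModModule.add_self, zero_add]
  exact hAB x hx (x + z) hxz (by rwa [cancel])

theorem exists_subspace_density_increment {V : Type*} [AddCommGroup V] [Module (ZMod 2) V]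
    [Finite V] {A B : Set V} (hB : 0 ∉ B) (hAB : ∀ x ∈ A, ∀ y ∈ A, x + y ∉ B) {d : ℕ}
    (hd : 20 ≤ d) (hdV : d ≤ finrank (ZMod 2) V)
    (hmeet : ∀ Y : Submodule (ZMod 2) V, finrank (ZMod 2) Y = d → ∃ y ∈ Y, y ∈ B)
    (hA : (Nat.card V : ℝ) ≤ 2 ^ d * Nat.card A) :
    ∃ (W : Submodule (ZMod 2) V) (x : V),
      finrank (ZMod 2) V ≤ finrank (ZMod 2) W + 40000000 * d ^ 6 ∧
      9 / 8 * (Nat.card A : ℝ) * Nat.card W ≤ Nat.card {w : W // x + w ∈ A} * Nat.card V := by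
  classical
  have := Fintype.ofFinite V
  rw [Nat.card_eq_card_toFinset A, Nat.card_eq_fintype_card] at hA ⊢
  have hA_nonempty : A.toFinset.Nonempty := by
    rw [← Finset.card_pos, Nat.pos_iff_ne_zero]
    intro hcard
    rw [hcard, Nat.cast_zero, mul_zero] at hA
    exact hA.not_gt card_pos_real
  have hBcard := card_le_two_pow_mul_card (F := B.toFinset) (by simpa using hB) hdV
    (by simpa using hmeet)
  simpa using density_increment hA_nonempty hd
    (fun z hz => autocorr_ind_eq_zero (B := B.toFinset) (by simpa using hAB) hz)
    (by exact_mod_cast hBcard) hA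

theorem le_mul_of_nine_eighths_mul_le {a b c v w : ℝ} (ha : 0 < a) (hb : 0 ≤ b)
    (h : 9 / 8 * a * w ≤ b * v) (hv : v ≤ 9 / 8 * (c * a)) : w ≤ c * b := by
  refine le_of_mul_le_mul_left ?_ (show 0 < 9 / 8 * a by positivity)
  calc 9 / 8 * a * w ≤ b * (9 / 8 * (c * a)) := h.trans (mul_le_mul_of_nonneg_left hv hb)
    _ = 9 / 8 * a * (c * b) := by ring

theorem finrank_le_of_card_le_pow_mul_card {d : ℕ} (hd : 20 ≤ d) (m : ℕ) {V : Type u}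
    [AddCommGroup V] [Module (ZMod 2) V] [Finite V] {A B : Set V} (hB : 0 ∉ B)
    (hAB : ∀ x ∈ A, ∀ y ∈ A, x + y ∉ B)
    (hmeet : ∀ Y : Submodule (ZMod 2) V, finrank (ZMod 2) Y = d → ∃ y ∈ Y, y ∈ B)
    (hAm : (Nat.card V : ℝ) ≤ (9 / 8) ^ m * Nat.card A)
    (hAd : (Nat.card V : ℝ) ≤ 2 ^ d * Nat.card A) :
    finrank (ZMod 2) V ≤ d + m * (40000000 * d ^ 6) := by
  by_contra! hlt
  have hdV : d ≤ finrank (ZMod 2) V := by omega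
  induction m generalizing V with
  | zero =>
    have A_eq_univ : A = Set.univ := by
      refine Set.eq_of_subset_of_ncard_le (Set.subset_univ _) ?_
      rw [Set.ncard_univ]
      simpa using hAm
    obtain ⟨Y, -, hY⟩ := exists_le_finrank_eq (Y := (⊤ : Submodule (ZMod 2) V)) (n := d)
      (by rwa [finrank_top])
    obtain ⟨y, -, hy⟩ := hmeet Y hY
    exact hAB y (by simp [A_eq_univ]) 0 (by simp [A_eq_univ]) (by rwa [add_zero])
  | succ m ih =>
    obtain ⟨W, x, hW, hx⟩ := exists_subspace_density_increment hB hAB hd hdV hmeet hAd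
    have hA₀ : (0 : ℝ) < Nat.card A := by
      have : (0 : ℝ) < Nat.card V := by exact_mod_cast Nat.card_pos
      exact pos_of_mul_pos_right (this.trans_le hAd) (by positivity)
    have finrank_W : d + m * (40000000 * d ^ 6) < finrank (ZMod 2) W := by
      rw [add_mul, one_mul] at hlt
      omega
    refine ih (V := W) (A := {w | x + w ∈ A}) (B := {w | (w : V) ∈ B}) (by simpa using hB)
      (fun u hu v hv huv => hAB _ hu _ hv ?_) (fun Y hY => ?_) ?_ ?_ finrank_W (by omega)
    · have cancel : x + (u : V) + (x + v) = ((u + v : W) : V) := by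
        rw [add_add_add_comm, ZModModule.add_self, zero_add, coe_add]
      rwa [cancel]
    · obtain ⟨_, ⟨w, hw, rfl⟩, hwB⟩ := hmeet (Y.map W.subtype)
        ((finrank_map_subtype_eq W Y).trans hY)
      exact ⟨w, hw, hwB⟩
    · exact le_mul_of_nine_eighths_mul_le hA₀ (Nat.cast_nonneg _) hx
        (hAm.trans_eq (by ring))
    · refine le_mul_of_nine_eighths_mul_le hA₀ (Nat.cast_nonneg _) hx (hAd.trans ?_)
      have : 0 ≤ 2 ^ d * (Nat.card A : ℝ) := by positivity
      linarith

theorem finrank_le_of_sumFree {V : Type u} [AddCommGroup V] [Module (ZMod 2) V] [Finite V]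
    {F : Set V} (hF : 0 ∉ F) (hsum : ∀ x ∈ F, ∀ y ∈ F, x + y ∉ F) {d : ℕ} (hd : 20 ≤ d)
    (hmeet : ∀ Y : Submodule (ZMod 2) V, finrank (ZMod 2) Y = d → ∃ y ∈ Y, y ∈ F) :
    finrank (ZMod 2) V ≤ 240000001 * d ^ 7 := by
  classical
  have := Fintype.ofFinite V
  have d_le : d ≤ d ^ 7 := Nat.le_self_pow (by norm_num) d
  obtain hlt | hdV := Nat.lt_or_ge (finrank (ZMod 2) V) d
  · omega
  have dense : (Nat.card V : ℝ) ≤ 2 ^ d * Nat.card F := by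
    rw [Nat.card_eq_card_toFinset F, Nat.card_eq_fintype_card]
    exact_mod_cast card_le_two_pow_mul_card (F := F.toFinset) (by simpa using hF) hdV
      (by simpa using hmeet)
  have two_pow_le : (2 : ℝ) ^ d ≤ (9 / 8) ^ (6 * d) := by
    rw [pow_mul]
    gcongr
    norm_num
  have := finrank_le_of_card_le_pow_mul_card hd (6 * d) hF hsum hmeet
    (dense.trans (by gcongr)) dense
  have : 6 * d * (40000000 * d ^ 6) = 240000000 * d ^ 7 := by ring
  omega

end SumFree

/-! ### Claw-free sets -/

section Stabilisers

variable {V : Type*} [AddCommGroup V] [Module (ZMod 2) V] {E : Set V} {W : Submodule (ZMod 2) V}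
  {a b c e s t w : V}

/-- `E` contains no induced claw. Linear independence need not be demanded: if `c = a + b`, then
`a + b ∈ E` holds anyway. -/
def ClawFree (E : Set V) : Prop :=
  ∀ a ∈ E, ∀ b ∈ E, ∀ c ∈ E, a ≠ b → a ≠ c → b ≠ c →
    a + b ∈ E ∨ a + c ∈ E ∨ b + c ∈ E ∨ a + b + c ∈ E

/-- A claw-free set `E` with a maximal subspace `W` among those avoiding `E`; in particular
`0 ∉ E`. -/
structure ClawFreePair (E : Set V) (W : Submodule (ZMod 2) V) : Prop where
  clawFree : ClawFree E
  maximal : Maximal (fun X : Submodule (ZMod 2) V => ∀ x ∈ X, x ∉ E) W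

/-- The stabiliser in `W` of the trace of `E` on the coset `e + W`. -/
def stab (E : Set V) (W : Submodule (ZMod 2) V) (e : V) : Submodule (ZMod 2) V :=
  AddSubgroup.toZModSubmodule 2
    { carrier := {w | w ∈ W ∧ ∀ w' ∈ W, e + w' ∈ E → e + w' + w ∈ E}
      zero_mem' := ⟨W.zero_mem, fun w' _ h => by rwa [add_zero]⟩
      add_mem' := fun {x y} hx hy => ⟨W.add_mem hx.1 hy.1, fun w' hw' h => by
        have hxy := hy.2 (w' + x) (W.add_mem hw' hx.1) (by rw [← add_assoc]; exact hx.2 w' hw' h)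
        rwa [show e + w' + (x + y) = e + (w' + x) + y by abel]⟩
      neg_mem' := fun {x} hx => by rwa [ZModModule.neg_eq_self] }

/-- Three elements of `E` with sum in `W`. When `(E, W)` is a `ClawFreePair`, their images in
`V ⧸ W` form a projective line. -/
structure IsTriad (E : Set V) (W : Submodule (ZMod 2) V) (a b c : V) : Prop where
  mem_fst : a ∈ E
  mem_snd : b ∈ E
  mem_trd : c ∈ E
  add_mem : a + b + c ∈ W

theorem IsTriad.rotate (h : IsTriad E W a b c) : IsTriad E W b c a :=
  ⟨h.mem_snd, h.mem_trd, h.mem_fst, by rw [add_comm, ← add_assoc]; exact h.add_mem⟩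

theorem IsTriad.swap (h : IsTriad E W a b c) : IsTriad E W b a c :=
  ⟨h.mem_snd, h.mem_fst, h.mem_trd, by rw [add_comm b a]; exact h.add_mem⟩

theorem ClawFreePair.notMem (S : ClawFreePair E W) (hw : w ∈ W) : w ∉ E :=
  S.maximal.prop w hw

theorem ClawFreePair.notMem_subspace (S : ClawFreePair E W) (he : e ∈ E) : e ∉ W :=
  fun h => S.notMem h he

theorem ClawFreePair.exists_add_mem (S : ClawFreePair E W) {v : V} (hv : v ∉ W) :
    ∃ e ∈ E, v + e ∈ W := by
  by_contra! h
  refine hv (S.maximal.le_of_ge (y := W ⊔ span (ZMod 2) {v}) (fun x hx hxE => ?_) le_sup_left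
    (mem_sup_right (mem_span_singleton_self v)))
  rcases mem_sup_span_singleton.1 hx with hx | hx
  · exact S.notMem hx hxE
  · exact h x hxE (by rwa [add_comm])

theorem ClawFreePair.exists_isTriad (S : ClawFreePair E W) (ha : a ∈ E) (hb : b ∈ E)
    (hab : a + b ∉ W) : ∃ c, IsTriad E W a b c :=
  let ⟨c, hc, h⟩ := S.exists_add_mem hab
  ⟨c, ha, hb, hc, h⟩

theorem stab_le : stab E W e ≤ W := fun _ h => h.1

theorem stab_le_of_add_mem {e' : V} (h : e + e' ∈ W) : stab E W e ≤ stab E W e' := by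
  refine fun w hw => ⟨hw.1, fun w' hw' h' => ?_⟩
  have := hw.2 (e + e' + w') (W.add_mem h hw') (by
    rwa [show e + (e + e' + w') = e' + w' by grind [ZModModule.add_self e]])
  rwa [show e + (e + e' + w') + w = e' + w' + w by grind [ZModModule.add_self e]] at this

theorem stab_congr {e' : V} (h : e + e' ∈ W) : stab E W e = stab E W e' :=
  le_antisymm (stab_le_of_add_mem h) (stab_le_of_add_mem (by rwa [add_comm]))

theorem stab_add_of_mem (hw : w ∈ W) : stab E W (e + w) = stab E W e :=
  stab_congr (by rwa [show e + w + e = w by grind [ZModModule.add_self e]])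

theorem ClawFreePair.mem_stab_iff (S : ClawFreePair E W) (he : e ∈ E) :
    w ∈ stab E W e ↔ w ∈ W ∧ e + w ∈ E := by
  refine ⟨fun h => ⟨h.1, ?_⟩, fun ⟨hw, hew⟩ => ⟨hw, fun w' hw' h => ?_⟩⟩
  · simpa only [add_zero] using h.2 0 W.zero_mem (by rwa [add_zero])
  · by_cases h₁ : w = 0
    · rwa [h₁, add_zero]
    by_cases h₂ : w' = 0
    · rwa [h₂, add_zero]
    by_cases h₃ : w = w'
    · rwa [h₃, add_assoc, ZModModule.add_self, add_zero]
    have notMem {x y : V} (hx : x ∈ W) (hxy : y = x) : y ∉ E := hxy ▸ S.notMem hx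
    rcases S.clawFree e he (e + w) hew (e + w') h (by simpa using h₁) (by simpa using h₂)
      (by simpa using h₃) with h₄ | h₄ | h₄ | h₄
    · exact absurd h₄ (notMem hw (by grind [ZModModule.add_self e]))
    · exact absurd h₄ (notMem hw' (by grind [ZModModule.add_self e]))
    · exact absurd h₄ (notMem (W.add_mem hw hw') (by grind [ZModModule.add_self e]))
    · rwa [show e + w' + w = e + (e + w) + (e + w') by grind [ZModModule.add_self e]]

theorem ClawFreePair.add_mem_of_mem_stab (S : ClawFreePair E W) (he : e ∈ E)
    (h : w ∈ stab E W e) : e + w ∈ E :=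
  ((S.mem_stab_iff he).1 h).2

theorem IsTriad.add_mem_stab (h : IsTriad E W a b c) (S : ClawFreePair E W) :
    a + b + c ∈ stab E W a ∨ a + b + c ∈ stab E W b ∨ a + b + c ∈ stab E W c := by
  obtain ⟨ha, hb, hc, hW⟩ := h
  rw [S.mem_stab_iff ha, S.mem_stab_iff hb, S.mem_stab_iff hc,
    show a + (a + b + c) = b + c by grind [ZModModule.add_self a],
    show b + (a + b + c) = a + c by grind [ZModModule.add_self b],
    show c + (a + b + c) = a + b by grind [ZModModule.add_self c]]
  have hE := S.notMem hW
  have hab : a ≠ b := by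
    rintro rfl
    rw [ZModModule.add_self, zero_add] at hE
    exact hE hc
  have hac : a ≠ c := by
    rintro rfl
    rw [show a + b + a = b by grind [ZModModule.add_self a]] at hE
    exact hE hb
  have hbc : b ≠ c := by
    rintro rfl
    rw [show a + b + b = a by grind [ZModModule.add_self b]] at hE
    exact hE ha
  have := S.clawFree a ha b hb c hc hab hac hbc
  tauto

theorem IsTriad.mem_stab_of_mem_sup (h : IsTriad E W a b c) (S : ClawFreePair E W)
    (hs : s ∈ stab E W a ⊔ stab E W b ⊔ stab E W c) :
    s ∈ stab E W a ∨ s ∈ stab E W b ∨ s ∈ stab E W c := by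
  have hsum : a + b + c ∈ stab E W a ⊔ stab E W b ⊔ stab E W c := by
    rcases h.add_mem_stab S with h | h | h
    · exact mem_sup_left (mem_sup_left h)
    · exact mem_sup_left (mem_sup_right h)
    · exact mem_sup_right h
  -- Moving the triad within its cosets changes its sum into any prescribed `s`.
  obtain ⟨y, hy, w, hw, hyw⟩ := mem_sup.1 (Submodule.add_mem _ hs hsum)
  obtain ⟨u, hu, v, hv, rfl⟩ := mem_sup.1 hy
  have heq : (a + u) + (b + v) + (c + w) = s := by grind [ZModModule.add_self (a + b + c)]
  have hsW : s ∈ W := (sup_le (sup_le stab_le stab_le) stab_le : _ ≤ W) hs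
  have triad : IsTriad E W (a + u) (b + v) (c + w) :=
    ⟨S.add_mem_of_mem_stab h.mem_fst hu, S.add_mem_of_mem_stab h.mem_snd hv,
      S.add_mem_of_mem_stab h.mem_trd hw, heq ▸ hsW⟩
  simpa only [heq, stab_add_of_mem (stab_le hu), stab_add_of_mem (stab_le hv),
    stab_add_of_mem (stab_le hw)] using triad.add_mem_stab S

theorem ClawFreePair.mem_stab_or_add_mem_stab (S : ClawFreePair E W) (ha : a ∈ E) (hb : b ∈ E)
    (hab : a + b ∈ E) (ht : t ∈ stab E W (a + b)) (hw : w ∈ stab E W (a + b))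
    (hwa : w ∉ stab E W a) : t ∈ stab E W b ∨ t + w ∈ stab E W b := by
  have htW := stab_le ht
  have hwW := stab_le hw
  have hw0 : w ≠ 0 := fun h => hwa (h ▸ Submodule.zero_mem _)
  have hbW := S.notMem_subspace hb
  have ht_mem : a + b + t ∈ E := S.add_mem_of_mem_stab hab ht
  have htw_mem : a + b + t + w ∈ E := by
    rw [add_assoc _ t]
    exact S.add_mem_of_mem_stab hab (Submodule.add_mem _ ht hw)
  have ne₁ : a ≠ a + b + t := fun h =>
    hbW ((show b = t by grind [ZModModule.add_self t]) ▸ htW)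
  have ne₂ : a ≠ a + b + t + w := fun h =>
    hbW ((show b = t + w by grind [ZModModule.add_self (t + w)]) ▸ W.add_mem htW hwW)
  have ne₃ : a + b + t ≠ a + b + t + w := by simpa using hw0
  rw [S.mem_stab_iff ha, not_and] at hwa
  rw [S.mem_stab_iff hb, S.mem_stab_iff hb]
  rcases S.clawFree a ha _ ht_mem _ htw_mem ne₁ ne₂ ne₃ with h | h | h | h
  · exact .inl ⟨htW, by rwa [show a + (a + b + t) = b + t by grind [ZModModule.add_self a]] at h⟩
  · exact .inr ⟨W.add_mem htW hwW, by
      rwa [show a + (a + b + t + w) = b + (t + w) by grind [ZModModule.add_self a]] at h⟩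
  · rw [show a + b + t + (a + b + t + w) = w by grind [ZModModule.add_self (a + b + t)]] at h
    exact absurd h (S.notMem hwW)
  · rw [show a + (a + b + t) + (a + b + t + w) = a + w by
      grind [ZModModule.add_self (a + b + t)]] at h
    exact absurd h (hwa hwW)

theorem IsTriad.add_fst_snd_mem (h : IsTriad E W a b c) (S : ClawFreePair E W)
    (hac : stab E W a ≤ stab E W c) (hbc : stab E W b ≤ stab E W c) : a + b ∈ E := by
  have hsum : a + b + c ∈ stab E W c := by
    rcases h.add_mem_stab S with h | h | h
    exacts [hac h, hbc h, h]
  have := S.add_mem_of_mem_stab h.mem_trd hsum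
  rwa [show c + (a + b + c) = a + b by grind [ZModModule.add_self c]] at this

theorem IsTriad.stab_snd_le_stab_fst (h : IsTriad E W a b c) (S : ClawFreePair E W)
    (hac : stab E W a ≤ stab E W c) (hbc : stab E W b < stab E W c) :
    stab E W b ≤ stab E W a := by
  have hab := h.add_fst_snd_mem S hac hbc.le
  have hstab : stab E W (a + b) = stab E W c := stab_congr h.add_mem
  obtain ⟨t, ht, htb⟩ := SetLike.exists_of_lt hbc
  intro w hw
  by_contra hwa
  rcases S.mem_stab_or_add_mem_stab h.mem_fst h.mem_snd hab (hstab ▸ ht) (hstab ▸ hbc.le hw) hwa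
    with h | h
  · exact htb h
  · exact htb ((Submodule.add_mem_iff_left _ hw).1 h)

theorem IsTriad.finrank_stab_trd [FiniteDimensional (ZMod 2) V] (h : IsTriad E W a b c)
    (S : ClawFreePair E W) (hac : stab E W a < stab E W c) (hbc : stab E W b < stab E W c) :
    finrank (ZMod 2) (stab E W c) = finrank (ZMod 2) (stab E W b) + 1 := by
  have hab := h.add_fst_snd_mem S hac.le hbc.le
  have hstab : stab E W (a + b) = stab E W c := stab_congr h.add_mem
  obtain ⟨w, hw, hwa⟩ := SetLike.exists_of_lt hac
  have hadd : ∀ s ∈ stab E W c, s ∉ stab E W b → s + w ∈ stab E W b := fun s hs hsb =>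
    (S.mem_stab_or_add_mem_stab h.mem_fst h.mem_snd hab (hstab ▸ hs) (hstab ▸ hw)
      hwa).resolve_left hsb
  refine finrank_eq_add_one_of_add_mem hbc.le hbc.not_ge fun s hs t ht hsb htb => ?_
  have := Submodule.add_mem _ (hadd s hs hsb) (hadd t ht htb)
  rwa [show s + w + (t + w) = s + t by grind [ZModModule.add_self w]] at this

theorem IsTriad.stab_eq_of_le_trd [FiniteDimensional (ZMod 2) V] (h : IsTriad E W a b c)
    (S : ClawFreePair E W) (hac : stab E W a ≤ stab E W c) (hbc : stab E W b ≤ stab E W c) :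
    stab E W a = stab E W c ∨ stab E W b = stab E W c ∨ (stab E W a = stab E W b ∧
      finrank (ZMod 2) (stab E W c) = finrank (ZMod 2) (stab E W a) + 1) := by
  rcases hac.eq_or_lt with hac' | hac'
  · exact .inl hac'
  rcases hbc.eq_or_lt with hbc' | hbc'
  · exact .inr (.inl hbc')
  have hab : stab E W a = stab E W b :=
    le_antisymm (h.swap.stab_snd_le_stab_fst S hbc hac') (h.stab_snd_le_stab_fst S hac hbc')
  exact .inr (.inr ⟨hab, hab ▸ h.finrank_stab_trd S hac' hbc'⟩)

theorem IsTriad.finrank_sup_stab [FiniteDimensional (ZMod 2) V] (h : IsTriad E W a b c)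
    (S : ClawFreePair E W) (ha : ¬ (stab E W b ≤ stab E W a ∧ stab E W c ≤ stab E W a))
    (hb : ¬ (stab E W a ≤ stab E W b ∧ stab E W c ≤ stab E W b))
    (hc : ¬ (stab E W a ≤ stab E W c ∧ stab E W b ≤ stab E W c)) :
    finrank (ZMod 2) ↥(stab E W a ⊔ stab E W b ⊔ stab E W c) =
      finrank (ZMod 2) (stab E W a) + 1 := by
  simp only [← sup_le_iff] at ha hb hc
  refine finrank_eq_add_one_of_union_three (B := stab E W b) (C := stab E W c)
    (lt_of_le_not_ge (le_sup_left.trans le_sup_left) fun hle => ha ?_) (fun hle => hb ?_)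
    (fun hle => hc ?_) fun s => h.mem_stab_of_mem_sup S
  · exact (sup_le_sup_right le_sup_right _).trans hle
  · exact (sup_le_sup_right le_sup_left _).trans hle
  · exact le_sup_left.trans hle

theorem IsTriad.stab_le_of_finrank_lt [FiniteDimensional (ZMod 2) V] (h : IsTriad E W a b c)
    (S : ClawFreePair E W)
    (hlt : finrank (ZMod 2) (stab E W a) < finrank (ZMod 2) (stab E W b)) :
    stab E W a ≤ stab E W b ∧ (stab E W b = stab E W c ∨ (stab E W c = stab E W a ∧
      finrank (ZMod 2) (stab E W b) = finrank (ZMod 2) (stab E W a) + 1)) := by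
  have nba : ¬ stab E W b ≤ stab E W a := fun h => (finrank_mono h).not_gt hlt
  by_cases hc : stab E W a ≤ stab E W c ∧ stab E W b ≤ stab E W c
  · rcases h.stab_eq_of_le_trd S hc.1 hc.2 with heq | heq | heq
    · exact absurd (heq ▸ hc.2) nba
    · exact ⟨heq ▸ hc.1, .inl heq⟩
    · exact absurd heq.1.ge nba
  by_cases hb : stab E W a ≤ stab E W b ∧ stab E W c ≤ stab E W b
  · refine ⟨hb.1, ?_⟩
    rcases h.rotate.swap.rotate.rotate.stab_eq_of_le_trd S hb.1 hb.2 with heq | heq | heq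
    · exact absurd heq.ge nba
    · exact .inl heq.symm
    · exact .inr ⟨heq.1.symm, heq.2⟩
  have ha : ¬ (stab E W b ≤ stab E W a ∧ stab E W c ≤ stab E W a) := fun h => nba h.1
  have h₁ := h.finrank_sup_stab S ha hb hc
  have h₂ := h.swap.finrank_sup_stab S hb ha (fun h => hc h.symm)
  rw [sup_comm (stab E W b)] at h₂
  omega

theorem IsTriad.stab_snd_of_stab_eq [FiniteDimensional (ZMod 2) V] (h : IsTriad E W a b c)
    (S : ClawFreePair E W) (hac : stab E W a = stab E W c) :
    stab E W b ≤ stab E W a ∨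
      finrank (ZMod 2) (stab E W b) = finrank (ZMod 2) (stab E W a) + 1 := by
  have hunion : ∀ s ∈ stab E W a ⊔ stab E W b, s ∈ stab E W a ∨ s ∈ stab E W b := fun s hs => by
    have := h.mem_stab_of_mem_sup S (mem_sup_left hs)
    rw [← hac] at this
    tauto
  rcases le_or_le_of_sup_subset_union hunion with hab | hba
  · rcases h.rotate.rotate.stab_eq_of_le_trd S (hac ▸ hab) hab with heq | heq | heq
    · exact .inl (hac ▸ heq.ge)
    · exact .inl heq.ge
    · exact .inr (hac ▸ heq.2)
  · exact .inl hba

end Stabilisers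

section Decomposers

variable {V : Type*} [AddCommGroup V] [Module (ZMod 2) V] {E : Set V} {W : Submodule (ZMod 2) V}
  {e x y v w : V} {i : ℕ}

/-- Outside of `V₀` the set `E` is a union of cosets of `V₀`. -/
def IsDecomposer (E : Set V) (V₀ : Submodule (ZMod 2) V) : Prop :=
  ∀ x ∈ E, x ∉ V₀ → ∀ v ∈ V₀, x + v ∈ E

/-- `E` is not assembled from smaller sets: its only decomposers are the trivial ones. -/
def IsIndecomposable (E : Set V) : Prop :=
  ∀ V₀ : Submodule (ZMod 2) V, IsDecomposer E V₀ → V₀ = ⊥ ∨ V₀ = ⊤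

theorem ClawFreePair.add_mem_and_stab_add [FiniteDimensional (ZMod 2) V] (S : ClawFreePair E W)
    (hx : x ∈ E) (hy : y ∈ E)
    (hlt : finrank (ZMod 2) (stab E W y) < finrank (ZMod 2) (stab E W x))
    (hstab : ∀ c, IsTriad E W x y c → stab E W x = stab E W c) :
    x + y ∈ E ∧ stab E W (x + y) = stab E W x := by
  have hxy : x + y ∉ W := fun h => hlt.ne' (by rw [stab_congr h])
  obtain ⟨c, hc⟩ := S.exists_isTriad hx hy hxy
  have hxc := hstab c hc
  have hyx := (hc.swap.stab_le_of_finrank_lt S hlt).1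
  exact ⟨hc.add_fst_snd_mem S hxc.le (hyx.trans hxc.le), (stab_congr hc.add_mem).trans hxc.symm⟩

theorem ClawFreePair.stab_le_of_finrank_lt [FiniteDimensional (ZMod 2) V] (S : ClawFreePair E W)
    (hx : x ∈ E) (hy : y ∈ E)
    (hlt : finrank (ZMod 2) (stab E W x) < finrank (ZMod 2) (stab E W y)) :
    stab E W x ≤ stab E W y :=
  let ⟨_, hc⟩ := S.exists_isTriad hx hy fun h => hlt.ne (by rw [stab_congr h])
  (hc.stab_le_of_finrank_lt S hlt).1

/-- The elements of `E` whose stabiliser has dimension `i`; used when `i` is the least dimension of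
a stabiliser. -/
def lowSet (E : Set V) (W : Submodule (ZMod 2) V) (i : ℕ) : Set V :=
  {e | e ∈ E ∧ finrank (ZMod 2) (stab E W e) = i}

/-- The span of `W` and `lowSet E W i`; when `i` is minimal, the elements of `E` in it span a
decomposer. -/
def lowSpan (E : Set V) (W : Submodule (ZMod 2) V) (i : ℕ) : Submodule (ZMod 2) V :=
  W ⊔ span (ZMod 2) (lowSet E W i)

theorem lowSet_subset_lowSpan : lowSet E W i ⊆ lowSpan E W i :=
  fun _ h => mem_sup_right (subset_span h)

theorem lt_finrank_stab_of_notMem_lowSpan (hi : ∀ e ∈ E, i ≤ finrank (ZMod 2) (stab E W e))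
    (hx : x ∈ E) (hxZ : x ∉ lowSpan E W i) : i < finrank (ZMod 2) (stab E W x) :=
  (hi x hx).lt_of_ne fun h => hxZ (lowSet_subset_lowSpan ⟨hx, h.symm⟩)

theorem ClawFreePair.add_mem_of_notMem_lowSpan [FiniteDimensional (ZMod 2) V]
    (S : ClawFreePair E W) (hi : ∀ e ∈ E, i ≤ finrank (ZMod 2) (stab E W e)) (hx : x ∈ E)
    (hxZ : x ∉ lowSpan E W i) (hv : v ∈ span (ZMod 2) (lowSet E W i)) :
    x + v ∈ E ∧ stab E W (x + v) = stab E W x := by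
  suffices h : x + v ∈ E ∧ x + v ∉ lowSpan E W i ∧ stab E W (x + v) = stab E W x from
    ⟨h.1, h.2.2⟩
  refine add_span_induction
    (p := fun u => u ∈ E ∧ u ∉ lowSpan E W i ∧ stab E W u = stab E W x) ?_ hv x ⟨hx, hxZ, rfl⟩
  rintro y hy u ⟨hu, huZ, hux⟩
  have hyZ : y ∈ lowSpan E W i := lowSet_subset_lowSpan hy
  have huyZ : u + y ∉ lowSpan E W i := mt (Submodule.add_mem_iff_left _ hyZ).1 huZ
  have hlt : finrank (ZMod 2) (stab E W y) < finrank (ZMod 2) (stab E W u) :=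
    hy.2 ▸ lt_finrank_stab_of_notMem_lowSpan hi hu huZ
  obtain ⟨hE, hstab⟩ := S.add_mem_and_stab_add hu hy.1 hlt fun c hc => by
    refine (hc.swap.stab_le_of_finrank_lt S hlt).2.resolve_right fun hcy => huyZ ?_
    have hcZ : c ∈ lowSpan E W i := lowSet_subset_lowSpan ⟨hc.mem_trd, hcy.1 ▸ hy.2⟩
    exact (Submodule.add_mem_iff_left _ hcZ).1 (mem_sup_left hc.add_mem)
  exact ⟨hE, huyZ, hstab.trans hux⟩

theorem ClawFreePair.finrank_stab_le_of_mem_lowSpan [FiniteDimensional (ZMod 2) V]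
    (S : ClawFreePair E W) (he : e ∈ E) (heZ : e ∈ lowSpan E W i) :
    finrank (ZMod 2) (stab E W e) ≤ i + 1 := by
  by_contra! hcon
  obtain ⟨w, hw, v, hv, rfl⟩ := mem_sup.1 heZ
  have hmem := (add_span_induction (p := fun u => u ∈ E ∧ i + 1 < finrank (ZMod 2) (stab E W u))
    (fun y hy u hu => ?_) hv (w + v) ⟨he, hcon⟩).1
  · rw [add_assoc, ZModModule.add_self, add_zero] at hmem
    exact S.notMem hw hmem
  · have hlt : finrank (ZMod 2) (stab E W y) < finrank (ZMod 2) (stab E W u) := by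
      have := hy.2
      omega
    obtain ⟨hE, hstab⟩ := S.add_mem_and_stab_add hu.1 hy.1 hlt fun c hc => by
      refine (hc.swap.stab_le_of_finrank_lt S hlt).2.resolve_right fun h => ?_
      have := hy.2
      omega
    exact ⟨hE, hstab ▸ hu.2⟩

theorem ClawFreePair.add_mem_of_mem_lowSpan [FiniteDimensional (ZMod 2) V] (S : ClawFreePair E W)
    (hi : ∀ e ∈ E, i ≤ finrank (ZMod 2) (stab E W e)) (hx : x ∈ E) (hxZ : x ∉ lowSpan E W i)
    (he : e ∈ E) (heZ : e ∈ lowSpan E W i) : x + e ∈ E := by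
  have hle := S.finrank_stab_le_of_mem_lowSpan he heZ
  have hlt := lt_finrank_stab_of_notMem_lowSpan hi hx hxZ
  obtain ⟨w, hw, v, hv, rfl⟩ := mem_sup.1 heZ
  obtain ⟨hxv, hstab⟩ := S.add_mem_of_notMem_lowSpan hi hx hxZ hv
  have hsum : x + (w + v) + (x + v) = w := by grind [ZModModule.add_self (x + v)]
  have triad : IsTriad E W x (w + v) (x + v) := ⟨hx, he, hxv, by rwa [hsum]⟩
  have hsub : stab E W (w + v) ≤ stab E W x := by
    refine (triad.stab_snd_of_stab_eq S hstab.symm).resolve_right fun h => ?_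
    omega
  have hwx : w ∈ stab E W (x + v) := by
    have := triad.add_mem_stab S
    rw [hsum, hstab] at this
    rw [hstab]
    exact this.elim id fun h => h.elim (@hsub w) id
  have := S.add_mem_of_mem_stab hxv hwx
  rwa [add_assoc, add_comm v w] at this

theorem ClawFreePair.isDecomposer_span_inter_lowSpan [FiniteDimensional (ZMod 2) V]
    (S : ClawFreePair E W) (hi : ∀ e ∈ E, i ≤ finrank (ZMod 2) (stab E W e)) :
    IsDecomposer E (span (ZMod 2) (E ∩ lowSpan E W i)) := by
  intro x hx hxV v hv
  have hxZ : x ∉ lowSpan E W i := fun h => hxV (subset_span ⟨hx, h⟩)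
  exact (add_span_induction (p := fun u => u ∈ E ∧ u ∉ lowSpan E W i) (fun e he u hu =>
    ⟨S.add_mem_of_mem_lowSpan hi hu.1 hu.2 he.1 he.2,
      mt (Submodule.add_mem_iff_left _ he.2).1 hu.2⟩) hv x ⟨hx, hxZ⟩).1

theorem ClawFreePair.span_inter_lowSpan_eq_top [FiniteDimensional (ZMod 2) V]
    (S : ClawFreePair E W) (hE : IsIndecomposable E) (he : e ∈ E)
    (hi : ∀ f ∈ E, finrank (ZMod 2) (stab E W e) ≤ finrank (ZMod 2) (stab E W f)) :
    span (ZMod 2) (E ∩ lowSpan E W (finrank (ZMod 2) (stab E W e))) = ⊤ := by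
  refine (hE _ (S.isDecomposer_span_inter_lowSpan hi)).resolve_left fun h => ?_
  have he₀ : e ∈ span (ZMod 2) (E ∩ lowSpan E W (finrank (ZMod 2) (stab E W e))) :=
    subset_span ⟨he, lowSet_subset_lowSpan ⟨he, rfl⟩⟩
  rw [h, mem_bot] at he₀
  exact S.notMem_subspace he (he₀ ▸ W.zero_mem)

theorem exists_finrank_stab_le (W : Submodule (ZMod 2) V) (hne : E.Nonempty) :
    ∃ e ∈ E, ∀ f ∈ E, finrank (ZMod 2) (stab E W e) ≤ finrank (ZMod 2) (stab E W f) := by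
  obtain ⟨e, he⟩ := exists_minimalFor_of_wellFoundedLT (· ∈ E) (finrank (ZMod 2) <| stab E W ·) hne
  exact ⟨e, he.1, fun f hf => (le_total _ _).elim id (he.2 hf)⟩

theorem ClawFreePair.span_eq_top [FiniteDimensional (ZMod 2) V]
    (S : ClawFreePair E W) (hE : IsIndecomposable E) (hne : E.Nonempty) :
    span (ZMod 2) E = ⊤ :=
  let ⟨_, he, hi⟩ := exists_finrank_stab_le W hne
  top_le_iff.1 ((S.span_inter_lowSpan_eq_top hE he hi).ge.trans
    (span_mono Set.inter_subset_left))

theorem ClawFreePair.finrank_stab_le_add_one [FiniteDimensional (ZMod 2) V]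
    (S : ClawFreePair E W) (hE : IsIndecomposable E) (he : e ∈ E)
    (hi : ∀ f ∈ E, finrank (ZMod 2) (stab E W e) ≤ finrank (ZMod 2) (stab E W f)) {f : V}
    (hf : f ∈ E) : finrank (ZMod 2) (stab E W f) ≤ finrank (ZMod 2) (stab E W e) + 1 :=
  S.finrank_stab_le_of_mem_lowSpan hf <|
    (S.span_inter_lowSpan_eq_top hE he hi).ge.trans (span_le.2 Set.inter_subset_right) mem_top

theorem ClawFreePair.le_iSup_stab (S : ClawFreePair E W) (hspan : span (ZMod 2) E = ⊤) :
    W ≤ ⨆ e ∈ E, stab E W e := by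
  have hK : ∀ e ∈ E, stab E W e ≤ ⨆ e ∈ E, stab E W e := fun e he => le_iSup₂_of_le e he le_rfl
  set K := ⨆ e ∈ E, stab E W e
  have hKW : K ≤ W := iSup₂_le fun _ _ => stab_le
  intro w hw
  -- Modulo `K` every vector is zero or the class of an element of `E`.
  have key := add_span_induction (p := fun u => u ∈ K ∨ ∃ e ∈ E, u + e ∈ K) (fun x hx u hu => ?_)
    (hspan ▸ mem_top : w ∈ span (ZMod 2) E) 0 (.inl K.zero_mem)
  · rw [zero_add] at key
    refine key.resolve_right fun ⟨e, he, hwe⟩ => S.notMem_subspace he ?_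
    exact (Submodule.add_mem_iff_right W hw).1 (hKW hwe)
  · rcases hu with hu | ⟨e, he, hue⟩
    · exact .inr ⟨x, hx, by rwa [add_assoc, ZModModule.add_self, add_zero]⟩
    · by_cases hxe : x + e ∈ W
      · have hxe' : x + e ∈ stab E W x := (S.mem_stab_iff hx).2
          ⟨hxe, by rwa [show x + (x + e) = e by grind [ZModModule.add_self x]]⟩
        have := K.add_mem hue (hK x hx hxe')
        exact .inl (by rwa [show u + e + (x + e) = u + x by grind [ZModModule.add_self e]] at this)
      · obtain ⟨c, hc⟩ := S.exists_isTriad hx he hxe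
        have hmem : x + e + c ∈ K := by
          rcases hc.add_mem_stab S with h | h | h
          exacts [hK x hx h, hK e he h, hK c hc.mem_trd h]
        have := K.add_mem hue hmem
        exact .inr ⟨c, hc.mem_trd, by
          rwa [show u + e + (x + e + c) = u + x + c by grind [ZModModule.add_self e]] at this⟩

theorem ClawFreePair.iInf_stab_eq_bot (S : ClawFreePair E W) (hE : IsIndecomposable E)
    (he : e ∈ E) : ⨅ e ∈ E, stab E W e = ⊥ := by
  refine (hE _ fun x hx _ v hv => ?_).resolve_right fun h => ?_
  · exact S.add_mem_of_mem_stab hx ((mem_iInf _).1 ((mem_iInf _).1 hv x) hx)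
  · have : e ∈ ⨅ e ∈ E, stab E W e := h ▸ mem_top
    exact S.notMem_subspace he (stab_le ((mem_iInf _).1 ((mem_iInf _).1 this e) he))

theorem exists_not_stab_le (hinf : ⨅ e ∈ E, stab E W e = ⊥)
    (hpos : 0 < finrank (ZMod 2) (stab E W e)) : ∃ f ∈ E, ¬ stab E W e ≤ stab E W f := by
  by_contra! h
  have hbot : stab E W e = ⊥ := le_bot_iff.1 (hinf ▸ le_iInf₂ h)
  rw [hbot, finrank_bot] at hpos
  exact hpos.false

end Decomposers

section Sunflower

variable {K M : Type*} [DivisionRing K] [AddCommGroup M] [Module K M] [FiniteDimensional K M]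

theorem inf_eq_inf_of_not_le {i : ℕ} {A C L : Submodule K M} (hC : finrank K C = i)
    (hCA : finrank K ↥(C ⊓ A) + 1 = i) (hA : A ≤ L) (hCL : ¬ C ≤ L) : C ⊓ A = C ⊓ L := by
  refine eq_of_le_of_finrank_le (inf_le_inf_left _ hA) ?_
  have : finrank K ↥(C ⊓ L) < finrank K C := finrank_lt_finrank_of_lt (inf_lt_left.2 hCL)
  omega

theorem forall_le_sup_or_forall_inf_le {i : ℕ} {s : Set (Submodule K M)}
    (hs : ∀ A ∈ s, finrank K A = i)
    (hinf : ∀ A ∈ s, ∀ B ∈ s, A ≠ B → finrank K ↥(A ⊓ B) + 1 = i) {A B : Submodule K M}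
    (hA : A ∈ s) (hB : B ∈ s) (hAB : A ≠ B) :
    (∀ C ∈ s, C ≤ A ⊔ B) ∨ ∀ C ∈ s, A ⊓ B ≤ C := by
  have meet {C D : Submodule K M} (hC : C ∈ s) (hD : D ∈ s) (hCL : ¬ C ≤ A ⊔ B)
      (hDL : D ≤ A ⊔ B) : C ⊓ D = C ⊓ (A ⊔ B) :=
    inf_eq_inf_of_not_le (hs C hC) (hinf C hC D hD fun h => hCL (h ▸ hDL)) hDL hCL
  have petal {C : Submodule K M} (hC : C ∈ s) (hCL : ¬ C ≤ A ⊔ B) : C ⊓ (A ⊔ B) = A ⊓ B := by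
    have hCA := meet hC hA hCL le_sup_left
    have hCB := meet hC hB hCL le_sup_right
    refine eq_of_le_of_finrank_eq
      (le_inf (hCA ▸ inf_le_right) (hCB ▸ inf_le_right)) (Nat.add_right_cancel (m := 1) ?_)
    rw [hinf A hA B hB hAB, ← hCA, hinf C hC A hA fun h => hCL (h ▸ le_sup_left)]
  by_contra! hcon
  obtain ⟨⟨C, hC, hCL⟩, D, hD, hDK⟩ := hcon
  by_cases hDL : D ≤ A ⊔ B
  · exact hDK (petal hC hCL ▸ meet hC hD hCL hDL ▸ inf_le_right)
  · exact hDK (petal hD hDL ▸ inf_le_left)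

end Sunflower

section Dichotomy

variable {V : Type*} [AddCommGroup V] [Module (ZMod 2) V] [FiniteDimensional (ZMod 2) V]
  {E : Set V} {W : Submodule (ZMod 2) V} {e x y : V} {i : ℕ}

theorem stab_eq_of_le_of_finrank_eq (hdim : ∀ e ∈ E, finrank (ZMod 2) (stab E W e) = i)
    (hx : x ∈ E) (hy : y ∈ E) (hxy : stab E W x ≤ stab E W y) : stab E W x = stab E W y :=
  eq_of_le_of_finrank_eq hxy ((hdim x hx).trans (hdim y hy).symm)

theorem ClawFreePair.finrank_inf_stab (S : ClawFreePair E W)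
    (hdim : ∀ e ∈ E, finrank (ZMod 2) (stab E W e) = i) (hx : x ∈ E) (hy : y ∈ E)
    (hne : stab E W x ≠ stab E W y) :
    finrank (ZMod 2) ↥(stab E W x ⊓ stab E W y) + 1 = i := by
  have heq {a b : V} (ha : a ∈ E) (hb : b ∈ E) := stab_eq_of_le_of_finrank_eq hdim ha hb
  obtain ⟨c, hc⟩ := S.exists_isTriad hx hy fun h => hne (stab_congr h)
  have hsup := hc.finrank_sup_stab S (fun h => hne (heq hy hx h.1).symm)
    (fun h => hne (heq hx hy h.1))
    (fun h => hne ((heq hx hc.mem_trd h.1).trans (heq hy hc.mem_trd h.2).symm))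
  have hle : finrank (ZMod 2) ↥(stab E W x ⊔ stab E W y) ≤ _ :=
    finrank_mono (le_sup_left (b := stab E W c))
  have hlt : finrank (ZMod 2) (stab E W y) < finrank (ZMod 2) ↥(stab E W x ⊔ stab E W y) :=
    finrank_lt_finrank_of_lt (right_lt_sup.2 fun h => hne (heq hx hy h))
  have hmod := finrank_sup_add_finrank_inf_eq (stab E W x) (stab E W y)
  rw [hdim x hx] at hsup hmod
  rw [hdim y hy] at hlt hmod
  omega

theorem ClawFreePair.finrank_dichotomy_of_const (S : ClawFreePair E W)
    (hsup : W ≤ ⨆ e ∈ E, stab E W e) (hinf : ⨅ e ∈ E, stab E W e = ⊥)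
    (hdim : ∀ e ∈ E, finrank (ZMod 2) (stab E W e) = i) (he : e ∈ E) :
    i ≤ 1 ∨ finrank (ZMod 2) W ≤ i + 1 := by
  by_cases hi : i = 0
  · omega
  obtain ⟨f, hf, hef⟩ := exists_not_stab_le hinf (by rw [hdim e he]; omega)
  have hne : stab E W e ≠ stab E W f := fun h => hef h.le
  have hmeet := S.finrank_inf_stab hdim he hf hne
  have hmod := finrank_sup_add_finrank_inf_eq (stab E W e) (stab E W f)
  rw [hdim e he, hdim f hf] at hmod
  rcases forall_le_sup_or_forall_inf_le (s := stab E W '' E) (i := i)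
      (Set.forall_mem_image.2 hdim) (by
        rintro _ ⟨x, hx, rfl⟩ _ ⟨y, hy, rfl⟩
        exact S.finrank_inf_stab hdim hx hy)
      (Set.mem_image_of_mem _ he) (Set.mem_image_of_mem _ hf) hne with h | h
  · have := finrank_mono (hsup.trans (iSup₂_le (Set.forall_mem_image.1 h)))
    omega
  · have hbot : stab E W e ⊓ stab E W f = ⊥ :=
      le_bot_iff.1 (hinf ▸ le_iInf₂ (Set.forall_mem_image.1 h))
    rw [hbot, finrank_bot] at hmeet
    omega

theorem ClawFreePair.finrank_le_of_finrank_eq_add_one (S : ClawFreePair E W)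
    (hsup : W ≤ ⨆ e ∈ E, stab E W e) (hinf : ⨅ e ∈ E, stab E W e = ⊥) (he : e ∈ E)
    (hpos : 0 < finrank (ZMod 2) (stab E W e))
    (hmin : ∀ f ∈ E, finrank (ZMod 2) (stab E W e) ≤ finrank (ZMod 2) (stab E W f))
    (hmax : ∀ f ∈ E, finrank (ZMod 2) (stab E W f) ≤ finrank (ZMod 2) (stab E W e) + 1)
    (hx : x ∈ E) (hdx : finrank (ZMod 2) (stab E W x) = finrank (ZMod 2) (stab E W e) + 1) :
    finrank (ZMod 2) W ≤ finrank (ZMod 2) (stab E W e) + 1 := by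
  set i := finrank (ZMod 2) (stab E W e)
  have low_or_high (f : V) (hf : f ∈ E) :
      finrank (ZMod 2) (stab E W f) = i ∨ finrank (ZMod 2) (stab E W f) = i + 1 := by
    have := hmin f hf
    have := hmax f hf
    omega
  have low_le_high {f g : V} (hf : f ∈ E) (hg : g ∈ E) (hdf : finrank (ZMod 2) (stab E W f) = i)
      (hdg : finrank (ZMod 2) (stab E W g) = i + 1) : stab E W f ≤ stab E W g :=
    S.stab_le_of_finrank_lt hf hg (by omega)
  obtain ⟨f, hf, hef⟩ := exists_not_stab_le hinf hpos
  have hdf : finrank (ZMod 2) (stab E W f) = i :=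
    (low_or_high f hf).resolve_right fun h => hef (low_le_high he hf rfl h)
  have hlt : finrank (ZMod 2) (stab E W f) < finrank (ZMod 2) ↥(stab E W e ⊔ stab E W f) :=
    finrank_lt_finrank_of_lt (right_lt_sup.2 hef)
  -- Two different minimal stabilisers span every larger one.
  have high_eq {g : V} (hg : g ∈ E) (hdg : finrank (ZMod 2) (stab E W g) = i + 1) :
      stab E W e ⊔ stab E W f = stab E W g :=
    eq_of_le_of_finrank_le (sup_le (low_le_high he hg rfl hdg) (low_le_high hf hg hdf hdg))
      (by omega)
  have hW : W ≤ stab E W x := hsup.trans <| iSup₂_le fun g hg =>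
    (low_or_high g hg).elim (fun hdg => low_le_high hg hx hdg hdx)
      fun hdg => ((high_eq hg hdg).symm.trans (high_eq hx hdx)).le
  exact hdx ▸ finrank_mono hW

theorem ClawFreePair.finrank_dichotomy (S : ClawFreePair E W) (hE : IsIndecomposable E)
    (hne : E.Nonempty) : (∀ e ∈ E, finrank (ZMod 2) (stab E W e) ≤ 1) ∨
      ∀ e ∈ E, finrank (ZMod 2) W ≤ finrank (ZMod 2) (stab E W e) + 1 := by
  obtain ⟨e, he, hmin⟩ := exists_finrank_stab_le W hne
  have hmax {f : V} (hf : f ∈ E) := S.finrank_stab_le_add_one hE he hmin hf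
  have hsup := S.le_iSup_stab (S.span_eq_top hE hne)
  have hinf := S.iInf_stab_eq_bot hE he
  rcases Nat.eq_zero_or_pos (finrank (ZMod 2) (stab E W e)) with h0 | hpos
  · exact .inl fun f hf => (hmax hf).trans (by omega)
  by_cases hup : ∃ x ∈ E, finrank (ZMod 2) (stab E W x) = finrank (ZMod 2) (stab E W e) + 1
  · obtain ⟨x, hx, hdx⟩ := hup
    have := S.finrank_le_of_finrank_eq_add_one hsup hinf he hpos hmin (fun _ => hmax) hx hdx
    exact .inr fun f hf => this.trans (Nat.add_le_add_right (hmin f hf) 1)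
  · push Not at hup
    have hdim (f : V) (hf : f ∈ E) :
        finrank (ZMod 2) (stab E W f) = finrank (ZMod 2) (stab E W e) :=
      le_antisymm (Nat.le_of_lt_succ ((hmax hf).lt_of_ne (hup f hf))) (hmin f hf)
    refine (S.finrank_dichotomy_of_const hsup hinf hdim he).imp (fun h f hf => ?_) fun h f hf => ?_
    · exact (hdim f hf).trans_le h
    · rwa [hdim f hf]

end Dichotomy

section Labellings

variable {V G : Type*} [AddCommGroup V] [Module (ZMod 2) V] [AddCommGroup G]
  {E : Set V} {W W' : Submodule (ZMod 2) V} {a b e e' : V} {g : V → G}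

/-- A labelling of the points of `E` modulo `W` by elements of a group, not supported on a single
nonzero label, in which the labels of a triad add up to zero whenever two of them are nonzero and
distinct. -/
structure IsTriadLabelling (E : Set V) (W : Submodule (ZMod 2) V) (g : V → G) : Prop where
  congr : ∀ a ∈ E, ∀ b ∈ E, a + b ∈ W → g a = g b
  trd_eq_add : ∀ a b c, IsTriad E W a b c → g a ≠ 0 → g b ≠ 0 → g a ≠ g b → g c = g a + g b
  exists_ne : ∀ t, ∃ e ∈ E, g e ≠ 0 ∧ g e ≠ t

/-- `W'` is a maximal subspace containing `W` on which the labelling `g` vanishes. -/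
def IsMaximalZeroSubspace (E : Set V) (W : Submodule (ZMod 2) V) (g : V → G)
    (W' : Submodule (ZMod 2) V) : Prop :=
  Maximal (fun X : Submodule (ZMod 2) V => W ≤ X ∧ ∀ e ∈ E, e ∈ X → g e = 0) W'

theorem IsMaximalZeroSubspace.exists_label_ne_zero (hW' : IsMaximalZeroSubspace E W g W') {v : V}
    (hv : v ∉ W') : ∃ e ∈ E, v + e ∈ W' ∧ g e ≠ 0 := by
  by_contra! h
  refine hv (hW'.le_of_ge (y := W' ⊔ span (ZMod 2) {v}) ⟨hW'.prop.1.trans le_sup_left, ?_⟩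
    le_sup_left (mem_sup_right (mem_span_singleton_self v)))
  intro e he heX
  rcases mem_sup_span_singleton.1 heX with heW | heW
  · exact hW'.prop.2 e he heW
  · exact h e he (by rwa [add_comm])

theorem IsTriadLabelling.exists_isTriad (hg : IsTriadLabelling E W g) (S : ClawFreePair E W)
    (ha : a ∈ E) (hb : b ∈ E) (hga : g a ≠ 0) (hgb : g b ≠ 0) (hab : g a ≠ g b) :
    ∃ c, IsTriad E W a b c ∧ g c = g a + g b :=
  let ⟨c, hc⟩ := S.exists_isTriad ha hb fun h => hab (hg.congr a ha b hb h)
  ⟨c, hc, hg.trd_eq_add a b c hc hga hgb hab⟩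

theorem injective_of_map_add_of_ne {Q : Type*} [AddCommGroup Q] [Module (ZMod 2) Q] {γ : Q → G}
    (hzero : ∀ q, γ q = 0 ↔ q = 0) (hadd : ∀ q r, γ q ≠ γ r → γ (q + r) = γ q + γ r)
    (hne : ∀ x, ∃ t, γ t ≠ 0 ∧ γ t ≠ x) : Function.Injective γ := by
  intro q r hqr
  by_contra hne'
  have hd : q + r ≠ 0 := mt add_eq_zero_iff_eq.1 hne'
  have hq : γ q ≠ 0 := fun h => hne' (by rw [(hzero q).1 h, (hzero r).1 (hqr ▸ h)])
  have hγd : γ (q + r) = γ q := by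
    by_contra h
    have hsum := hadd _ _ h
    rw [show q + r + q = r by grind [ZModModule.add_self q], ← hqr, right_eq_add, hzero] at hsum
    exact hd hsum
  obtain ⟨t, ht0, htq⟩ := hne (γ q)
  have hqt : γ (q + t) = γ q + γ t := hadd q t htq.symm
  have hrqt : γ (r + (q + t)) = γ r + γ (q + t) := hadd r _ (by rw [hqt, ← hqr]; simpa using ht0)
  have hdt : γ (q + r + t) = γ (q + r) + γ t := hadd _ t (hγd ▸ htq.symm)
  rw [show r + (q + t) = q + r + t by abel, hdt, hγd, hqt, ← hqr, add_right_inj,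
    right_eq_add] at hrqt
  exact hq hrqt

variable [Module (ZMod 2) G]

theorem IsTriadLabelling.congr_of_isMaximal (hg : IsTriadLabelling E W g) (S : ClawFreePair E W)
    (hW' : IsMaximalZeroSubspace E W g W') (ha : a ∈ E) (hb : b ∈ E) (hab : a + b ∈ W')
    (hga : g a ≠ 0) (hgb : g b ≠ 0) : g a = g b := by
  by_contra hne
  obtain ⟨c, hc, hgc⟩ := hg.exists_isTriad S ha hb hga hgb hne
  rw [hW'.prop.2 c hc.mem_trd ((Submodule.add_mem_iff_right W' hab).1 (hW'.prop.1 hc.add_mem))]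
    at hgc
  exact hne (add_eq_zero_iff_eq.1 hgc.symm)

theorem IsTriadLabelling.exists_quotient_label (hg : IsTriadLabelling E W g)
    (S : ClawFreePair E W) (hW' : IsMaximalZeroSubspace E W g W') :
    ∃ γ : V ⧸ W' → G, γ 0 = 0 ∧ (∀ e ∈ E, g e ≠ 0 → γ (W'.mkQ e) = g e) ∧
      ∀ q ≠ 0, ∃ e ∈ E, g e ≠ 0 ∧ W'.mkQ e = q := by
  classical
  have hex : ∀ q : V ⧸ W', q ≠ 0 → ∃ e ∈ E, g e ≠ 0 ∧ W'.mkQ e = q := by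
    intro q hq
    obtain ⟨v, rfl⟩ := W'.mkQ_surjective q
    obtain ⟨e, he, hve, hge⟩ := hW'.exists_label_ne_zero (v := v) (by simpa using hq)
    refine ⟨e, he, hge, ?_⟩
    rwa [mkQ_eq_mkQ_iff, add_comm]
  choose! k hkE hk0 hkq using hex
  refine ⟨fun q => if q = 0 then 0 else g (k q), if_pos rfl, fun e he hge => ?_,
    fun q hq => ⟨k q, hkE q hq, hk0 q hq, hkq q hq⟩⟩
  have hq : W'.mkQ e ≠ 0 := by
    simpa using fun h => hge (hW'.prop.2 e he h)
  simp only [if_neg hq]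
  exact hg.congr_of_isMaximal S hW' (hkE _ hq) he (mkQ_eq_mkQ_iff.1 (hkq _ hq)) (hk0 _ hq) hge

theorem IsTriadLabelling.exists_zero_subspace [FiniteDimensional (ZMod 2) V]
    [FiniteDimensional (ZMod 2) G] (hg : IsTriadLabelling E W g) (S : ClawFreePair E W) :
    ∃ W', W ≤ W' ∧ (∀ e ∈ E, e ∈ W' → g e = 0) ∧
      finrank (ZMod 2) V ≤ finrank (ZMod 2) W' + finrank (ZMod 2) G := by
  obtain ⟨W', hW'⟩ : ∃ W', IsMaximalZeroSubspace E W g W' :=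
    exists_maximal_of_wellFoundedGT _ ⟨W, le_rfl, fun e he heW => absurd heW (S.notMem_subspace he)⟩
  refine ⟨W', hW'.prop.1, hW'.prop.2, ?_⟩
  obtain ⟨γ, hγ0, hγ, hex⟩ := hg.exists_quotient_label S hW'
  have hzero : ∀ q, γ q = 0 ↔ q = 0 := by
    refine fun q => ⟨fun hq => ?_, fun hq => hq ▸ hγ0⟩
    by_contra hq0
    obtain ⟨e, he, hge, rfl⟩ := hex q hq0
    exact hge (hγ e he hge ▸ hq)
  have hadd : ∀ q r, γ q ≠ γ r → γ (q + r) = γ q + γ r := by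
    intro q r hqr
    by_cases hq : q = 0
    · rw [hq, hγ0, zero_add, zero_add]
    by_cases hr : r = 0
    · rw [hr, hγ0, add_zero, add_zero]
    obtain ⟨a, ha, hga, rfl⟩ := hex q hq
    obtain ⟨b, hb, hgb, rfl⟩ := hex r hr
    rw [hγ a ha hga, hγ b hb hgb] at hqr ⊢
    obtain ⟨c, hc, hgc⟩ := hg.exists_isTriad S ha hb hga hgb hqr
    have hcab : W'.mkQ a + W'.mkQ b = W'.mkQ c := by
      rw [← map_add, mkQ_eq_mkQ_iff]
      exact hW'.prop.1 hc.add_mem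
    rw [hcab, hγ c hc.mem_trd (hgc ▸ mt add_eq_zero_iff_eq.1 hqr), hgc]
  have hinj : Function.Injective γ := injective_of_map_add_of_ne hzero hadd fun x =>
    let ⟨e, he, hge, hgx⟩ := hg.exists_ne x
    ⟨W'.mkQ e, by rwa [hγ e he hge], by rwa [hγ e he hge]⟩
  have : Finite G := Module.finite_of_finite (ZMod 2)
  have hcard := Nat.card_le_card_of_injective γ hinj
  rw [Module.natCard_eq_pow_finrank (K := ZMod 2) (V := V ⧸ W'),
    Module.natCard_eq_pow_finrank (K := ZMod 2) (V := G), Nat.card_zmod,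
    Nat.pow_le_pow_iff_right one_lt_two] at hcard
  have := finrank_quotient_add_finrank W'
  omega

end Labellings

section Structure

variable {V : Type*} [AddCommGroup V] [Module (ZMod 2) V] {E : Set V} {W W' : Submodule (ZMod 2) V}

theorem span_singleton_eq_span_singleton_iff {X : Type*} [AddCommGroup X] [Module (ZMod 2) X]
    {v w : X} : span (ZMod 2) {v} = span (ZMod 2) {w} ↔ v = w := by
  refine ⟨fun h => ?_, fun h => h ▸ rfl⟩
  have hv : v ∈ span (ZMod 2) {w} := h ▸ mem_span_singleton_self v
  have hw : w ∈ span (ZMod 2) {v} := h ▸ mem_span_singleton_self w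
  rw [mem_span_singleton_iff_eq] at hv hw
  rcases hv with rfl | rfl
  · exact (hw.elim id id).symm
  · rfl

theorem ClawFreePair.isTriadLabelling_of_span_singleton (S : ClawFreePair E W)
    (hW : 2 ≤ finrank (ZMod 2) W) (hsup : W ≤ ⨆ e ∈ E, stab E W e) {g : V → W}
    (hg : ∀ e ∈ E, stab E W e = span (ZMod 2) {(g e : V)}) : IsTriadLabelling E W g where
  congr a ha b hb hab := by
    rw [← Subtype.coe_inj, ← span_singleton_eq_span_singleton_iff, ← hg a ha, ← hg b hb,
      stab_congr hab]
  trd_eq_add a b c h ha hb hab := by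
    have hmem : ((g a + g b : W) : V) ∈ stab E W a ⊔ stab E W b ⊔ stab E W c := by
      rw [hg a h.mem_fst, hg b h.mem_snd]
      exact mem_sup_left (add_mem_sup (mem_span_singleton_self _) (mem_span_singleton_self _))
    have hne : g a + g b ≠ 0 := mt add_eq_zero_iff_eq.1 hab
    have := h.mem_stab_of_mem_sup S hmem
    simp only [hg a h.mem_fst, hg b h.mem_snd, hg c h.mem_trd, mem_span_singleton_iff_eq,
      ZeroMemClass.coe_eq_zero, Subtype.coe_inj, hne, false_or, add_eq_left,
      add_eq_right, ha, hb] at this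
    exact this.symm
  exists_ne t := by
    by_contra! h
    have hWt : W ≤ span (ZMod 2) {(t : V)} := hsup.trans <| iSup₂_le fun e he => by
      rw [hg e he, span_singleton_le_iff_mem]
      by_cases he0 : g e = 0
      · rw [he0]
        exact Submodule.zero_mem _
      · rw [h e he he0]
        exact mem_span_singleton_self _
    have := (finrank_mono hWt).trans ((finrank_le_one_iff_isPrincipal _).2 ⟨_, rfl⟩)
    omega

variable [FiniteDimensional (ZMod 2) V]

theorem ClawFreePair.exists_subspace_of_stab_eq_bot (S : ClawFreePair E W) (hWW' : W ≤ W')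
    (hstab : ∀ e ∈ E, e ∈ W' → stab E W e = ⊥) :
    ∃ Y : Submodule (ZMod 2) V, (∀ y ∈ Y, y ≠ 0 → y ∈ E) ∧
      finrank (ZMod 2) W' ≤ finrank (ZMod 2) W + finrank (ZMod 2) Y := by
  have eq_zero {x w : V} (hx : x ∈ E) (hxW' : x ∈ W') (hw : w ∈ stab E W x) : w = 0 := by
    rwa [hstab x hx hxW', mem_bot] at hw
  have add_mem {x y : V} (hx : x ∈ E) (hxW' : x ∈ W') (hy : y ∈ E) (hyW' : y ∈ W') :
      x + y = 0 ∨ x + y ∈ E := by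
    by_cases hxy : x + y ∈ W
    · refine .inl (eq_zero hx hxW' ((S.mem_stab_iff hx).2 ⟨hxy, ?_⟩))
      rwa [show x + (x + y) = y by grind [ZModModule.add_self x]]
    · obtain ⟨c, hc⟩ := S.exists_isTriad hx hy hxy
      have hcW' : c ∈ W' :=
        (Submodule.add_mem_iff_right W' (W'.add_mem hxW' hyW')).1 (hWW' hc.add_mem)
      have hsum : x + y + c = 0 := by
        rcases hc.add_mem_stab S with h | h | h
        exacts [eq_zero hx hxW' h, eq_zero hy hyW' h, eq_zero hc.mem_trd hcW' h]
      exact .inr (add_eq_zero_iff_eq.1 hsum ▸ hc.mem_trd)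
  let Y : Submodule (ZMod 2) V := AddSubgroup.toZModSubmodule 2
    { carrier := {v | v ∈ W' ∧ (v = 0 ∨ v ∈ E)}
      zero_mem' := ⟨W'.zero_mem, .inl rfl⟩
      add_mem' := by
        rintro x y ⟨hxW', hx⟩ ⟨hyW', hy⟩
        refine ⟨W'.add_mem hxW' hyW', ?_⟩
        rcases hx with rfl | hx
        · rwa [zero_add]
        rcases hy with rfl | hy
        · exact .inr (by rwa [add_zero])
        · exact add_mem hx hxW' hy hyW'
      neg_mem' := fun {x} hx => by rwa [ZModModule.neg_eq_self] }
  refine ⟨Y, fun y hy hy0 => hy.2.resolve_left hy0, ?_⟩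
  have hle : W' ≤ W ⊔ Y := fun v hv => by
    by_cases hvW : v ∈ W
    · exact mem_sup_left hvW
    · obtain ⟨e, he, heW⟩ := S.exists_add_mem hvW
      have heY : e ∈ Y := ⟨(Submodule.add_mem_iff_right W' hv).1 (hWW' heW), .inr he⟩
      exact (Submodule.add_mem_iff_left _ (mem_sup_right heY)).1 (mem_sup_left heW)
  exact (finrank_mono hle).trans (finrank_add_le_finrank_add_finrank W Y)

theorem ClawFreePair.exists_subspace_of_stab_eq (S : ClawFreePair E W) (hWW' : W ≤ W')
    (hstab : ∀ e ∈ E, e ∈ W' → stab E W e = W) :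
    ∃ Y : Submodule (ZMod 2) V, (∀ y ∈ Y, y ≠ 0 → y ∈ E) ∧
      finrank (ZMod 2) W' ≤ finrank (ZMod 2) W + finrank (ZMod 2) Y := by
  have hfull : ∀ v ∈ W', v ∉ W → v ∈ E := by
    intro v hv hvW
    obtain ⟨e, he, heW⟩ := S.exists_add_mem hvW
    have heW' : e ∈ W' := (Submodule.add_mem_iff_right W' hv).1 (hWW' heW)
    have := S.add_mem_of_mem_stab he (hstab e he heW' ▸ heW)
    rwa [show e + (v + e) = v by grind [ZModModule.add_self e]] at this
  obtain ⟨Q, hQ⟩ := Submodule.exists_isCompl W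
  refine ⟨Q ⊓ W', fun y hy hy0 => hfull y hy.2 fun hyW => hy0 ?_, ?_⟩
  · exact disjoint_def.1 hQ.disjoint y hyW hy.1
  · have hle : W' ≤ W ⊔ Q ⊓ W' := by
      rw [← sup_inf_assoc_of_le Q hWW', hQ.sup_eq_top, top_inf_eq]
    exact (finrank_mono hle).trans (finrank_add_le_finrank_add_finrank _ _)

theorem exists_dual_ker_eq {K X : Type*} [Field K] [AddCommGroup X] [Module K X]
    [FiniteDimensional K X] {H : Submodule K X} (h : finrank K X ≤ finrank K H + 1) :
    ∃ f : Dual K X, LinearMap.ker f = H := by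
  by_cases htop : H = ⊤
  · exact ⟨0, htop ▸ LinearMap.ker_zero⟩
  obtain ⟨f, hf0, hf⟩ := exists_le_ker_of_lt_top H (lt_top_iff_ne_top.2 htop)
  have := Dual.finrank_ker_add_one_of_ne_zero hf0
  exact ⟨f, (eq_of_le_of_finrank_le hf (by omega)).symm⟩

section Dual

variable {X : Type*} [AddCommGroup X] [Module (ZMod 2) X] {f g h : Dual (ZMod 2) X}

theorem dual_eq_of_ker_eq (hfg : LinearMap.ker f = LinearMap.ker g) : f = g := by
  ext x
  have hx : f x = 0 ↔ g x = 0 := by rw [← LinearMap.mem_ker, hfg, LinearMap.mem_ker]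
  generalize f x = s, g x = t at hx
  revert s t
  decide

theorem ker_sup_ker_eq_top (hf : f ≠ 0) (hg : g ≠ 0) (hfg : f ≠ g) :
    LinearMap.ker f ⊔ LinearMap.ker g = ⊤ :=
  (LinearMap.isCoatom_ker_of_surjective (LinearMap.surjective hf)).sup_eq_top_of_ne
    (LinearMap.isCoatom_ker_of_surjective (LinearMap.surjective hg)) (mt dual_eq_of_ker_eq hfg)

theorem dual_eq_add_of_ker_union (hf : f ≠ 0) (hg : g ≠ 0) (hh : h ≠ 0)
    (hunion : ∀ x, f x = 0 ∨ g x = 0 ∨ h x = 0) : h = f + g := by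
  obtain ⟨a, -, hfa, hga⟩ := exists_mem_notMem_notMem (S := ⊤)
    (by rwa [top_le_iff, LinearMap.ker_eq_top] : ¬ ⊤ ≤ LinearMap.ker f)
    (by rwa [top_le_iff, LinearMap.ker_eq_top] : ¬ ⊤ ≤ LinearMap.ker g)
  rw [LinearMap.mem_ker, ← ne_eq, zmod_two_ne_zero_iff] at hfa hga
  have hha : h a = 0 := by simpa [hfa, hga] using hunion a
  have eq_one {s : X} (hs : h s = 1) : f s + g s = 1 := by
    have h₁ := hunion s
    have h₂ := hunion (s + a)
    rw [map_add, map_add, map_add, hfa, hga, hha, hs] at h₂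
    rw [hs] at h₁
    generalize f s = x, g s = y at h₁ h₂
    revert x y
    decide
  obtain ⟨t, ht⟩ := DFunLike.ne_iff.1 hh
  rw [LinearMap.zero_apply, zmod_two_ne_zero_iff] at ht
  ext s
  rcases zmod_two_eq_zero_or_one (h s) with hs | hs
  · have hst := eq_one (s := s + t) (by rw [map_add, hs, ht, zero_add])
    have := eq_one ht
    rw [map_add, map_add] at hst
    rw [hs, LinearMap.add_apply]
    grind
  · rw [hs, LinearMap.add_apply, eq_one hs]

end Dual

theorem ClawFreePair.isTriadLabelling_of_ker (S : ClawFreePair E W)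
    (hW : 2 ≤ finrank (ZMod 2) W) (hinf : ⨅ e ∈ E, stab E W e = ⊥) {g : V → Dual (ZMod 2) W}
    (hg : ∀ e ∈ E, LinearMap.ker (g e) = (stab E W e).submoduleOf W) :
    IsTriadLabelling E W g where
  congr a ha b hb hab := dual_eq_of_ker_eq (by rw [hg a ha, hg b hb, stab_congr hab])
  trd_eq_add a b c h ha hb hab := by
    have hker {e : V} (he : e ∈ E) (w : W) : g e w = 0 ↔ (w : V) ∈ stab E W e := by
      rw [← LinearMap.mem_ker, hg e he]
      rfl
    refine dual_eq_add_of_ker_union ha hb (fun hc => ?_) fun w => ?_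
    · have hWc : W ≤ stab E W c := fun w hw => (hker h.mem_trd ⟨w, hw⟩).1 (by rw [hc]; rfl)
      have eq_zero {e : V} (he : e ∈ E) (hec : stab E W e = stab E W c) : g e = 0 :=
        LinearMap.ext fun w => (hker he w).2 (hec ▸ hWc w.2)
      rcases h.stab_eq_of_le_trd S (stab_le.trans hWc) (stab_le.trans hWc) with hac | hbc | habc
      · exact ha (eq_zero h.mem_fst hac)
      · exact hb (eq_zero h.mem_snd hbc)
      · exact hab (dual_eq_of_ker_eq (by rw [hg a h.mem_fst, hg b h.mem_snd, habc.1]))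
    · rw [hker h.mem_fst, hker h.mem_snd, hker h.mem_trd]
      refine h.mem_stab_of_mem_sup S (mem_sup_left ?_)
      obtain ⟨y, hy, z, hz, rfl⟩ := mem_sup.1
        (ker_sup_ker_eq_top ha hb hab ▸ mem_top : w ∈ LinearMap.ker (g a) ⊔ LinearMap.ker (g b))
      exact add_mem_sup ((hker h.mem_fst y).1 hy) ((hker h.mem_snd z).1 hz)
  exists_ne t := by
    by_contra! h
    obtain ⟨w, hwt, hw0⟩ := exists_mem_ne_zero_of_ne_bot
      (LinearMap.ker_ne_bot_of_finrank_lt (f := t) (by rw [finrank_self]; omega))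
    have hle : (w : V) ∈ ⨅ e ∈ E, stab E W e := by
      simp only [mem_iInf]
      intro e he
      suffices w ∈ LinearMap.ker (g e) by rwa [hg e he] at this
      rw [LinearMap.mem_ker]
      by_cases he0 : g e = 0
      · rw [he0, LinearMap.zero_apply]
      · rwa [h e he he0]
    rw [hinf, mem_bot, ZeroMemClass.coe_eq_zero] at hle
    exact hw0 hle

theorem ClawFreePair.exists_subspace_of_finrank_stab_le_one (S : ClawFreePair E W)
    (hW : 2 ≤ finrank (ZMod 2) W) (hsup : W ≤ ⨆ e ∈ E, stab E W e)
    (hstab : ∀ e ∈ E, finrank (ZMod 2) (stab E W e) ≤ 1) :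
    ∃ Y : Submodule (ZMod 2) V, (∀ y ∈ Y, y ≠ 0 → y ∈ E) ∧
      finrank (ZMod 2) V ≤ 2 * finrank (ZMod 2) W + finrank (ZMod 2) Y := by
  have hgen : ∀ e ∈ E, ∃ w : W, stab E W e = span (ZMod 2) {(w : V)} := fun e he => by
    obtain ⟨w, hw⟩ := ((finrank_le_one_iff_isPrincipal _).1 (hstab e he)).principal
    exact ⟨⟨w, stab_le (hw ▸ mem_span_singleton_self w)⟩, hw⟩
  choose! g hg using hgen
  obtain ⟨W', hWW', hzero, hdim⟩ :=
    (S.isTriadLabelling_of_span_singleton hW hsup hg).exists_zero_subspace S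
  obtain ⟨Y, hYE, hY⟩ := S.exists_subspace_of_stab_eq_bot hWW' fun e he heW' => by
    rw [hg e he, hzero e he heW', ZeroMemClass.coe_zero, span_zero_singleton]
  exact ⟨Y, hYE, by omega⟩

theorem ClawFreePair.exists_subspace_of_finrank_le_stab_add_one (S : ClawFreePair E W)
    (hW : 2 ≤ finrank (ZMod 2) W) (hinf : ⨅ e ∈ E, stab E W e = ⊥)
    (hstab : ∀ e ∈ E, finrank (ZMod 2) W ≤ finrank (ZMod 2) (stab E W e) + 1) :
    ∃ Y : Submodule (ZMod 2) V, (∀ y ∈ Y, y ≠ 0 → y ∈ E) ∧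
      finrank (ZMod 2) V ≤ 2 * finrank (ZMod 2) W + finrank (ZMod 2) Y := by
  have hdual : ∀ e ∈ E, ∃ f : Dual (ZMod 2) W, LinearMap.ker f = (stab E W e).submoduleOf W :=
    fun e he => exists_dual_ker_eq (by
      rw [(submoduleOfEquivOfLe stab_le).finrank_eq]
      exact hstab e he)
  choose! g hg using hdual
  obtain ⟨W', hWW', hzero, hdim⟩ :=
    (S.isTriadLabelling_of_ker hW hinf hg).exists_zero_subspace S
  rw [Subspace.dual_finrank_eq] at hdim
  obtain ⟨Y, hYE, hY⟩ := S.exists_subspace_of_stab_eq hWW' fun e he heW' => by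
    refine stab_le.antisymm (submoduleOf_eq_top.1 ?_)
    rw [← hg e he, hzero e he heW', LinearMap.ker_zero]
  exact ⟨Y, hYE, by omega⟩

theorem ClawFreePair.exists_subspace_of_isIndecomposable (S : ClawFreePair E W)
    (hE : IsIndecomposable E) (hW : 2 ≤ finrank (ZMod 2) W) :
    ∃ Y : Submodule (ZMod 2) V, (∀ y ∈ Y, y ≠ 0 → y ∈ E) ∧
      finrank (ZMod 2) V ≤ 2 * finrank (ZMod 2) W + finrank (ZMod 2) Y := by
  rcases E.eq_empty_or_nonempty with rfl | hne
  · have hWtop : W = ⊤ := S.maximal.eq_of_le (fun x _ => Set.notMem_empty x) le_top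
    refine ⟨⊥, fun y hy hy0 => absurd ((mem_bot _).1 hy) hy0, ?_⟩
    rw [hWtop, finrank_top]
    omega
  have hspan := S.span_eq_top hE hne
  obtain ⟨e, he⟩ := hne
  rcases S.finrank_dichotomy hE ⟨e, he⟩ with h | h
  · exact S.exists_subspace_of_finrank_stab_le_one hW (S.le_iSup_stab hspan) h
  · exact S.exists_subspace_of_finrank_le_stab_add_one hW (S.iInf_stab_eq_bot hE he) h

end Structure

/-! ### Homogeneous subspaces -/

section HomogeneousBound

variable {V : Type u} [AddCommGroup V] [Module (ZMod 2) V] {E : Set V}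

/-- The dimension of `V` is at most `C` times the seventh power of the sum of the dimensions of a
subspace avoiding `E` and a subspace with all nonzero vectors in `E`. Summing the two dimensions,
rather than taking the larger, lets the bound add up over a direct sum. -/
def HomogeneousBound (C : ℕ) (E : Set V) : Prop :=
  ∃ W₀ W₁ : Submodule (ZMod 2) V, (∀ w ∈ W₀, w ∉ E) ∧ (∀ w ∈ W₁, w ≠ 0 → w ∈ E) ∧
    finrank (ZMod 2) V ≤ C * (finrank (ZMod 2) W₀ + finrank (ZMod 2) W₁) ^ 7

theorem HomogeneousBound.mono {C D : ℕ} (h : HomogeneousBound C E) (hCD : C ≤ D) :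
    HomogeneousBound D E :=
  let ⟨W₀, W₁, h₀, h₁, hdim⟩ := h
  ⟨W₀, W₁, h₀, h₁, hdim.trans (Nat.mul_le_mul_right _ hCD)⟩

theorem homogeneousBound_empty : HomogeneousBound 1 (∅ : Set V) := by
  refine ⟨⊤, ⊥, fun w _ => Set.notMem_empty w, fun w hw hw0 => absurd ((mem_bot _).1 hw) hw0, ?_⟩
  rw [finrank_top, finrank_bot, add_zero, one_mul]
  exact Nat.le_self_pow (by norm_num) _

theorem two_le_finrank_span_pair [FiniteDimensional (ZMod 2) V] {x y : V} (hx : x ≠ 0)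
    (hy : y ≠ 0) (hxy : x ≠ y) : 2 ≤ finrank (ZMod 2) (span (ZMod 2) {x, y}) := by
  have hlt : span (ZMod 2) {x} < span (ZMod 2) {x, y} := by
    refine (span_mono (Set.singleton_subset_iff.2 (Set.mem_insert _ _))).lt_of_not_ge fun hle => ?_
    have hyx : y ∈ span (ZMod 2) {x} := hle (subset_span (Set.mem_insert_of_mem _ rfl))
    rcases mem_span_singleton_iff_eq.1 hyx with h | h
    exacts [hy h, hxy h.symm]
  have := finrank_lt_finrank_of_lt hlt
  rwa [finrank_span_singleton hx] at this

theorem notMem_of_mem_span_pair {x y : V} (h0 : 0 ∉ E) (hx : x ∉ E) (hy : y ∉ E)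
    (hxy : x + y ∉ E) : ∀ v ∈ span (ZMod 2) {x, y}, v ∉ E := by
  intro v hv
  obtain ⟨a, b, rfl⟩ := mem_span_pair.1 hv
  rcases zmod_two_eq_zero_or_one a with rfl | rfl <;>
    rcases zmod_two_eq_zero_or_one b with rfl | rfl <;>
    simpa only [zero_smul, one_smul, zero_add, add_zero]

theorem homogeneousBound_of_finrank_le_one [Finite V] (h0 : 0 ∉ E) (hE : E.Nonempty)
    (hrank : ∀ X : Submodule (ZMod 2) V, (∀ x ∈ X, x ∉ E) → finrank (ZMod 2) X ≤ 1) :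
    HomogeneousBound (240000001 * 21 ^ 7) E := by
  have hsum : ∀ x ∈ {v | v ≠ 0 ∧ v ∉ E}, ∀ y ∈ {v | v ≠ 0 ∧ v ∉ E},
      x + y ∉ {v | v ≠ 0 ∧ v ∉ E} := by
    rintro x ⟨hx0, hx⟩ y ⟨hy0, hy⟩ ⟨hxy0, hxy⟩
    have := hrank _ (notMem_of_mem_span_pair h0 hx hy hxy)
    have := two_le_finrank_span_pair hx0 hy0 (mt add_eq_zero_iff_eq.2 hxy0)
    omega
  obtain ⟨Y, hY, hYmax⟩ := Set.Finite.exists_maximalFor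
    (fun Y : Submodule (ZMod 2) V => finrank (ZMod 2) Y) {Y | ∀ y ∈ Y, y ≠ 0 → y ∈ E}
    (Set.toFinite _) ⟨⊥, fun y hy hy0 => absurd ((mem_bot _).1 hy) hy0⟩
  have hle : ∀ Z : Submodule (ZMod 2) V, (∀ z ∈ Z, z ≠ 0 → z ∈ E) →
      finrank (ZMod 2) Z ≤ finrank (ZMod 2) Y :=
    fun Z hZ => (le_total _ _).elim id (hYmax hZ)
  have hpos : 1 ≤ finrank (ZMod 2) Y := by
    obtain ⟨e, he⟩ := hE
    rw [← finrank_span_singleton (K := ZMod 2) (ne_of_mem_of_not_mem he h0)]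
    exact hle _ fun y hy hy0 => by rwa [(mem_span_singleton_iff_eq.1 hy).resolve_left hy0]
  have hmeet : ∀ Z : Submodule (ZMod 2) V, finrank (ZMod 2) Z = finrank (ZMod 2) Y + 20 →
      ∃ z ∈ Z, z ∈ {v | v ≠ 0 ∧ v ∉ E} := by
    intro Z hZ
    by_contra! hcon
    have := hle Z fun z hz hz0 => by_contra fun hzE => hcon z hz ⟨hz0, hzE⟩
    omega
  refine ⟨⊥, Y, fun w hw => by rwa [(mem_bot _).1 hw], hY, ?_⟩
  calc finrank (ZMod 2) V ≤ 240000001 * (finrank (ZMod 2) Y + 20) ^ 7 :=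
        finrank_le_of_sumFree (fun h => h.1 rfl) hsum (by omega) hmeet
    _ ≤ 240000001 * (21 * finrank (ZMod 2) Y) ^ 7 := by gcongr; omega
    _ = _ := by rw [finrank_bot, zero_add, mul_pow, mul_assoc]

theorem ClawFree.homogeneousBound_of_isIndecomposable [Finite V] (hcf : ClawFree E)
    (hE : IsIndecomposable E) {X : Submodule (ZMod 2) V} (hX : ∀ x ∈ X, x ∉ E)
    (hrank : 2 ≤ finrank (ZMod 2) X) : HomogeneousBound 2 E := by
  obtain ⟨W, hXW, hW⟩ := Set.Finite.exists_le_maximal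
    (Set.toFinite {X : Submodule (ZMod 2) V | ∀ x ∈ X, x ∉ E}) hX
  obtain ⟨Y, hYE, hY⟩ := ClawFreePair.exists_subspace_of_isIndecomposable ⟨hcf, hW⟩ hE
    (hrank.trans (finrank_mono hXW))
  refine ⟨W, Y, hW.prop, hYE, ?_⟩
  calc finrank (ZMod 2) V ≤ 2 * (finrank (ZMod 2) W + finrank (ZMod 2) Y) := by omega
    _ ≤ 2 * (finrank (ZMod 2) W + finrank (ZMod 2) Y) ^ 7 := by
      gcongr; exact Nat.le_self_pow (by norm_num) _

theorem finrank_map_sup_map {K M : Type*} [DivisionRing K] [AddCommGroup M] [Module K M]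
    [FiniteDimensional K M] {M₀ M₁ : Submodule K M} (h : Disjoint M₀ M₁)
    (X₀ : Submodule K M₀) (X₁ : Submodule K M₁) :
    finrank K (X₀.map M₀.subtype ⊔ X₁.map M₁.subtype : Submodule K M) =
      finrank K X₀ + finrank K X₁ := by
  have hinf : X₀.map M₀.subtype ⊓ X₁.map M₁.subtype = ⊥ :=
    (h.mono (map_subtype_le _ _) (map_subtype_le _ _)).eq_bot
  have := finrank_sup_add_finrank_inf_eq (X₀.map M₀.subtype) (X₁.map M₁.subtype)
  rwa [hinf, finrank_bot, add_zero, finrank_map_subtype_eq, finrank_map_subtype_eq] at this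

theorem IsDecomposer.add_mem_iff {V₀ V₁ : Submodule (ZMod 2) V} (hd : IsDecomposer E V₀)
    (h : Disjoint V₀ V₁) {x y : V} (hx : x ∈ V₀) (hy : y ∈ V₁) (hy0 : y ≠ 0) :
    x + y ∈ E ↔ y ∈ E := by
  have hyV₀ : y ∉ V₀ := fun hy' => hy0 (disjoint_def.1 h y hy' hy)
  refine ⟨fun hE => ?_, fun hE => add_comm x y ▸ hd y hE hyV₀ x hx⟩
  have := hd _ hE (mt (Submodule.add_mem_iff_right V₀ hx).1 hyV₀) x hx
  rwa [add_right_comm, ZModModule.add_self, zero_add] at this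

theorem IsDecomposer.homogeneousBound [Finite V] {V₀ V₁ : Submodule (ZMod 2) V}
    (hd : IsDecomposer E V₀) (h : IsCompl V₀ V₁) {C : ℕ}
    (h₀ : HomogeneousBound C ((↑) ⁻¹' E : Set V₀)) (h₁ : HomogeneousBound C ((↑) ⁻¹' E : Set V₁)) :
    HomogeneousBound C E := by
  obtain ⟨X₀, Y₀, hX₀, hY₀, hdim₀⟩ := h₀
  obtain ⟨X₁, Y₁, hX₁, hY₁, hdim₁⟩ := h₁
  refine ⟨X₀.map V₀.subtype ⊔ X₁.map V₁.subtype, Y₀.map V₀.subtype ⊔ Y₁.map V₁.subtype,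
    fun w hw => ?_, fun w hw hw0 => ?_, ?_⟩
  · obtain ⟨-, ⟨x, hx, rfl⟩, -, ⟨y, hy, rfl⟩, rfl⟩ := mem_sup.1 hw
    by_cases hy0 : (y : V) = 0
    · rw [subtype_apply, subtype_apply, hy0, add_zero]
      exact hX₀ x hx
    · exact mt (hd.add_mem_iff h.disjoint x.2 y.2 hy0).1 (hX₁ y hy)
  · obtain ⟨-, ⟨x, hx, rfl⟩, -, ⟨y, hy, rfl⟩, rfl⟩ := mem_sup.1 hw
    by_cases hy0 : (y : V) = 0
    · simp only [subtype_apply, hy0, add_zero] at hw0 ⊢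
      exact hY₀ x hx (mt (congrArg Subtype.val) hw0)
    · exact (hd.add_mem_iff h.disjoint x.2 y.2 hy0).2 (hY₁ y hy (mt (congrArg Subtype.val) hy0))
  · rw [finrank_map_sup_map h.disjoint, finrank_map_sup_map h.disjoint, add_add_add_comm,
      ← finrank_add_eq_of_isCompl h]
    calc _ ≤ C * (finrank (ZMod 2) X₀ + finrank (ZMod 2) Y₀) ^ 7 +
          C * (finrank (ZMod 2) X₁ + finrank (ZMod 2) Y₁) ^ 7 := Nat.add_le_add hdim₀ hdim₁
      _ ≤ _ := by
        rw [← mul_add]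
        gcongr
        exact pow_add_pow_le (Nat.zero_le _) (Nat.zero_le _) (by norm_num)

theorem ClawFree.preimage_subtype (hE : ClawFree E) (X : Submodule (ZMod 2) V) :
    ClawFree ((↑) ⁻¹' E : Set X) := fun a ha b hb c hc hab hac hbc =>
  hE a ha b hb c hc (mt Subtype.ext hab) (mt Subtype.ext hac) (mt Subtype.ext hbc)

end HomogeneousBound

theorem ClawFree.homogeneousBound {V : Type u} [AddCommGroup V] [Module (ZMod 2) V] [Finite V]
    {E : Set V} (hE : ClawFree E) (h0 : 0 ∉ E) : HomogeneousBound (240000001 * 21 ^ 7) E := by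
  induction hn : finrank (ZMod 2) V using Nat.strong_induction_on generalizing V with
  | _ n ih =>
  subst hn
  rcases E.eq_empty_or_nonempty with rfl | hne
  · exact homogeneousBound_empty.mono (by norm_num)
  by_cases hrank : ∀ X : Submodule (ZMod 2) V, (∀ x ∈ X, x ∉ E) → finrank (ZMod 2) X ≤ 1
  · exact homogeneousBound_of_finrank_le_one h0 hne hrank
  push Not at hrank
  obtain ⟨X, hX, hX2⟩ := hrank
  by_cases hind : IsIndecomposable E
  · exact (hE.homogeneousBound_of_isIndecomposable hind hX hX2).mono (by norm_num)
  simp only [IsIndecomposable, not_forall, not_or] at hind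
  obtain ⟨V₀, hd, hbot, htop⟩ := hind
  obtain ⟨V₁, hcompl⟩ := Submodule.exists_isCompl V₀
  have restrict : ∀ U : Submodule (ZMod 2) V, U ≠ ⊤ →
      HomogeneousBound (240000001 * 21 ^ 7) ((↑) ⁻¹' E : Set U) :=
    fun U hU => ih _ (finrank_lt hU) (hE.preimage_subtype U) h0 rfl
  have hV₁ : V₁ ≠ ⊤ := fun hV₁ => hbot (eq_bot_of_isCompl_top (hV₁ ▸ hcompl))
  exact hd.homogeneousBound hcompl (restrict V₀ htop) (restrict V₁ hV₁)

section Colourings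

theorem forall_ne_zero_iff {P : (Fin 3 → ZMod 2) → Prop} : (∀ v ≠ 0, P v) ↔
    P ![1, 0, 0] ∧ P ![0, 1, 0] ∧ P ![0, 0, 1] ∧ P ![1, 1, 0] ∧ P ![1, 0, 1] ∧ P ![0, 1, 1] ∧
      P ![1, 1, 1] := by
  refine ⟨fun h => ⟨h _ ?_, h _ ?_, h _ ?_, h _ ?_, h _ ?_, h _ ?_, h _ ?_⟩, ?_⟩
  case refine_8 =>
    intro h v hv
    have : v = ![1, 0, 0] ∨ v = ![0, 1, 0] ∨ v = ![0, 0, 1] ∨ v = ![1, 1, 0] ∨ v = ![1, 0, 1] ∨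
        v = ![0, 1, 1] ∨ v = ![1, 1, 1] := by
      revert v
      decide
    rcases this with rfl | rfl | rfl | rfl | rfl | rfl | rfl <;> tauto
  all_goals decide

theorem clawColouring_eq_ite (v : Fin 3 → ZMod 2) :
    clawColouring v = if ∃ i : Fin 3, v = Pi.single i 1 then 0 else 1 := by
  unfold clawColouring
  congr

theorem clawFree_of_forall_not_claw {V : Type*} [AddCommGroup V] [Module (ZMod 2) V]
    {c : V → Fin 2} (hc : ¬ ∃ φ : (Fin 3 → ZMod 2) →ₗ[ZMod 2] V,
      Function.Injective φ ∧ ∀ v : Fin 3 → ZMod 2, v ≠ 0 → c (φ v) = clawColouring v) :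
    ClawFree {v | v ≠ 0 ∧ c v = 0} := by
  rintro x ⟨hx0, hx⟩ y ⟨hy0, hy⟩ z ⟨hz0, hz⟩ hxy hxz hyz
  by_contra! hcon
  obtain ⟨hxyE, hxzE, hyzE, hxyzE⟩ := hcon
  have hxy0 : x + y ≠ 0 := mt add_eq_zero_iff_eq.1 hxy
  have hxz0 : x + z ≠ 0 := mt add_eq_zero_iff_eq.1 hxz
  have hyz0 : y + z ≠ 0 := mt add_eq_zero_iff_eq.1 hyz
  have hxyz0 : x + y + z ≠ 0 := fun h => hxyE (add_eq_zero_iff_eq.1 h ▸ ⟨hz0, hz⟩)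
  have colour_one : ∀ v ≠ 0, v ∉ {v | v ≠ 0 ∧ c v = 0} → c v = 1 :=
    fun v hv0 hv => Fin.eq_one_of_ne_zero _ fun h => hv ⟨hv0, h⟩
  have key : ∀ v ≠ 0, Fintype.linearCombination (ZMod 2) ![x, y, z] v ≠ 0 ∧
      c (Fintype.linearCombination (ZMod 2) ![x, y, z] v) = clawColouring v := by
    simp only [Fintype.linearCombination_apply, Fin.sum_univ_three, clawColouring_eq_ite]
    rw [forall_ne_zero_iff]
    simp only [Matrix.cons_val, zero_smul, one_smul, zero_add, add_zero]
    refine ⟨⟨hx0, ?_⟩, ⟨hy0, ?_⟩, ⟨hz0, ?_⟩, ⟨hxy0, ?_⟩, ⟨hxz0, ?_⟩, ⟨hyz0, ?_⟩, hxyz0, ?_⟩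
    · rw [hx]; decide
    · rw [hy]; decide
    · rw [hz]; decide
    · rw [colour_one _ hxy0 hxyE]; decide
    · rw [colour_one _ hxz0 hxzE]; decide
    · rw [colour_one _ hyz0 hyzE]; decide
    · rw [colour_one _ hxyz0 hxyzE]; decide
  refine hc ⟨_, (injective_iff_map_eq_zero _).2 fun v hv => ?_, fun v hv => (key v hv).2⟩
  by_contra hv0
  exact (key v hv0).1 hv

theorem inv_mul_rpow_le_of_le_mul_pow {x M w : ℝ} {k : ℕ} (hk : k ≠ 0) (hx : 0 ≤ x) (hM : 0 < M)
    (hw : 0 ≤ w) (h : x ≤ M * (2 * w) ^ k) :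
    (2 * M ^ ((1 : ℝ) / k))⁻¹ * x ^ ((1 : ℝ) / k) ≤ w := by
  rw [inv_mul_le_iff₀ (by positivity)]
  calc x ^ ((1 : ℝ) / k) ≤ (M * (2 * w) ^ k) ^ ((1 : ℝ) / k) := by gcongr
    _ = M ^ ((1 : ℝ) / k) * (2 * w) := by
      rw [Real.mul_rpow hM.le (by positivity), one_div,
        Real.pow_rpow_inv_natCast (by positivity) hk]
    _ = 2 * M ^ ((1 : ℝ) / k) * w := by ring

theorem HomogeneousBound.exists_homogeneous {V : Type*} [AddCommGroup V] [Module (ZMod 2) V]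
    {c : V → Fin 2} {C : ℕ} (h : HomogeneousBound C {v | v ≠ 0 ∧ c v = 0}) (hC : 0 < C) :
    ∃ W : Submodule (ZMod 2) V,
      (2 * (C : ℝ) ^ ((1 : ℝ) / 7))⁻¹ * (finrank (ZMod 2) V : ℝ) ^ ((1 : ℝ) / 7) ≤
        finrank (ZMod 2) W ∧
      ∀ v ∈ W, v ≠ 0 → ∀ w ∈ W, w ≠ 0 → c v = c w := by
  obtain ⟨W₀, W₁, h₀, h₁, hdim⟩ := h
  have large : ∀ W : Submodule (ZMod 2) V,
      finrank (ZMod 2) W₀ + finrank (ZMod 2) W₁ ≤ 2 * finrank (ZMod 2) W →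
      (2 * (C : ℝ) ^ ((1 : ℝ) / 7))⁻¹ * (finrank (ZMod 2) V : ℝ) ^ ((1 : ℝ) / 7) ≤
        finrank (ZMod 2) W := fun W hW =>
    mod_cast inv_mul_rpow_le_of_le_mul_pow (k := 7) (by norm_num) (Nat.cast_nonneg _)
      (Nat.cast_pos.2 hC) (Nat.cast_nonneg _) (by exact_mod_cast hdim.trans (by gcongr))
  rcases le_total (finrank (ZMod 2) W₀) (finrank (ZMod 2) W₁) with hle | hle
  · exact ⟨W₁, large W₁ (by omega), fun v hv hv0 w hw hw0 =>
      (h₁ v hv hv0).2.trans (h₁ w hw hw0).2.symm⟩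
  · have colour_one : ∀ v ∈ W₀, v ≠ 0 → c v = 1 := fun v hv hv0 =>
      Fin.eq_one_of_ne_zero _ fun hcv => h₀ v hv ⟨hv0, hcv⟩
    exact ⟨W₀, large W₀ (by omega), fun v hv hv0 w hw hw0 =>
      (colour_one v hv hv0).trans (colour_one w hw hw0).symm⟩

end Colourings

end ClawRamsey

open ClawRamsey in
theorem stmt8_general :
    ∃ C : ℝ, 0 < C ∧ ∀ (V : Type u) [AddCommGroup V] [Module (ZMod 2) V]
      [FiniteDimensional (ZMod 2) V] (c : V → Fin 2),
      (¬ ∃ φ : (Fin 3 → ZMod 2) →ₗ[ZMod 2] V,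
        Function.Injective φ ∧ ∀ v : Fin 3 → ZMod 2, v ≠ 0 → c (φ v) = clawColouring v) →
      ∃ W : Submodule (ZMod 2) V,
        C * (Module.finrank (ZMod 2) V : ℝ) ^ ((1 : ℝ) / 7) ≤ (Module.finrank (ZMod 2) W : ℝ) ∧
        ∀ v ∈ W, v ≠ 0 → ∀ w ∈ W, w ≠ 0 → c v = c w := by
  refine ⟨(2 * ((240000001 * 21 ^ 7 : ℕ) : ℝ) ^ ((1 : ℝ) / 7))⁻¹, by positivity, ?_⟩
  intro V _ _ _ c hc
  have : Finite V := Module.finite_of_finite (ZMod 2)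
  have hbound := (clawFree_of_forall_not_claw hc).homogeneousBound fun h => h.1 rfl
  exact hbound.exists_homogeneous (by norm_num)

/-- There is a constant `C > 0` such that every claw-free 2-colouring of the nonzero
vectors of `𝔽₂ⁿ` admits a subspace of dimension at least `C n^{1/7}` on whose nonzero
vectors the colouring is constant. -/
theorem stmt8 :
    ∃ C : ℝ, 0 < C ∧ ∀ (n : ℕ) (c : (Fin n → ZMod 2) → Fin 2),
      (¬ ∃ φ : (Fin 3 → ZMod 2) →ₗ[ZMod 2] (Fin n → ZMod 2),
        Function.Injective φ ∧ ∀ v : Fin 3 → ZMod 2, v ≠ 0 → c (φ v) = clawColouring v) →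
      ∃ W : Submodule (ZMod 2) (Fin n → ZMod 2),
        C * (n : ℝ) ^ ((1 : ℝ) / 7) ≤ (Module.finrank (ZMod 2) W : ℝ) ∧
        ∀ v ∈ W, v ≠ 0 → ∀ w ∈ W, w ≠ 0 → c v = c w := by
  obtain ⟨C, hC, h⟩ := stmt8_general
  exact ⟨C, hC, fun n c hc => by simpa only [Module.finrank_fin_fun] using h (Fin n → ZMod 2) c hc⟩
end

section
/- Let F be a field and let v : F → ℝ ∪ {∞} be a non-Archimedean valuation, i.e., v(x) = ∞ if and only if x = 0, v(ab) = v(a) + v(b) for all a, b, and v(a + b) ≥ min(v(a), v(b)) for all a, b. For n ≥ 1 and a nonzero vector u = (u₁, …, u_n) ∈ Fⁿ, let c_v(u) be the smallest index s ∈ {1, …, n} such that v(u_s) = min_{1 ≤ i ≤ n} v(u_i). If x¹, …, x^t ∈ Fⁿ ∖ {0} are nonzero vectors with c_v(x¹) < c_v(x²) < … < c_v(x^t), then x¹, …, x^t are linearly independent over F. -/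
/-!
Suppose the valuation attains its minimum over the coordinates of `u` first at `s`, and over those
of `w` first at `t ≠ s`. Order the pairs `(v (u s), s)` and `(v (w t), t)` lexicographically. The
vector with the smaller pair strictly dominates the other one at its own index, so `u + w` has
the same minimum at the same first index. Hence the first index of any sum of vectors with distinct
first indices is one of theirs; rescaling does not move first indices, so no nontrivial linear
combination can vanish.
-/

section Pivot

variable {R Γ ι κ : Type*} [Ring R] [LinearOrderedAddCommMonoidWithTop Γ] [LinearOrder ι]
  {v : AddValuation R Γ} {u w : ι → R} {s t : ι}

/-- `IsPivot v u s` says that `s` is the index `c_v(u)`: the least index at which `v (u i)` attains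
its minimum. Requiring this minimum to be finite makes `IsPivot v 0 s` false, in accordance with
`c_v` being defined on nonzero vectors only. -/
structure IsPivot (v : AddValuation R Γ) (u : ι → R) (s : ι) : Prop where
  ne_top : v (u s) ≠ ⊤
  le : ∀ i, v (u s) ≤ v (u i)
  lt : ∀ i, i < s → v (u s) < v (u i)

namespace IsPivot

theorem of_ne_zero (hv : ∀ a, v a = ⊤ → a = 0) (hu : u ≠ 0) (hle : ∀ i, v (u s) ≤ v (u i))
    (hlt : ∀ i, i < s → v (u s) < v (u i)) : IsPivot v u s where
  ne_top h := hu <| funext fun i ↦ hv (u i) <| top_le_iff.1 <| h ▸ hle i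
  le := hle
  lt := hlt

theorem ne_zero (hu : IsPivot v u s) : u ≠ 0 := by
  rintro rfl
  exact hu.ne_top v.map_zero

theorem smul (hu : IsPivot v u s) {a : R} (ha : v a ≠ ⊤) : IsPivot v (a • u) s where
  ne_top h := by
    rw [Pi.smul_apply, smul_eq_mul, v.map_mul, ← add_top (v a), add_right_inj_of_ne_top ha] at h
    exact hu.ne_top h
  le i := by
    simpa only [Pi.smul_apply, smul_eq_mul, v.map_mul, add_le_add_iff_right_of_ne_top ha]
      using hu.le i
  lt i hi := by
    simpa only [Pi.smul_apply, smul_eq_mul, v.map_mul, add_lt_add_iff_right_of_ne_top ha]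
      using hu.lt i hi

theorem add_of_le_of_lt (hu : IsPivot v u s) (hle : ∀ i, v (u s) ≤ v (w i))
    (hlt : ∀ i, i ≤ s → v (u s) < v (w i)) : IsPivot v (u + w) s := by
  have h_eq : v ((u + w) s) = v (u s) := v.map_add_eq_of_lt_left (hlt s le_rfl)
  refine ⟨?_, fun i ↦ ?_, fun i hi ↦ ?_⟩ <;> rw [h_eq]
  · exact hu.ne_top
  · exact v.map_le_add (hu.le i) (hle i)
  · exact v.map_lt_add (hu.lt i hi) (hlt i hi.le)

theorem add_of_lex_lt (hu : IsPivot v u s) (hw : IsPivot v w t)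
    (h : toLex (v (u s), s) < toLex (v (w t), t)) : IsPivot v (u + w) s := by
  rcases Prod.Lex.toLex_lt_toLex.1 h with hlt | ⟨heq, hst⟩
  · exact hu.add_of_le_of_lt (fun i ↦ hlt.le.trans (hw.le i)) fun i _ ↦ hlt.trans_le (hw.le i)
  · exact hu.add_of_le_of_lt (fun i ↦ heq.trans_le (hw.le i))
      fun i hi ↦ heq.trans_lt (hw.lt i (hi.trans_lt hst))

theorem add (hu : IsPivot v u s) (hw : IsPivot v w t) (hst : s ≠ t) :
    IsPivot v (u + w) s ∨ IsPivot v (u + w) t := by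
  have hne : toLex (v (u s), s) ≠ toLex (v (w t), t) :=
    fun h ↦ hst (congrArg (fun p ↦ (ofLex p).2) h)
  rcases hne.lt_or_gt with h | h
  · exact .inl (hu.add_of_lex_lt hw h)
  · exact .inr (add_comm w u ▸ hw.add_of_lex_lt hu h)

theorem exists_sum {S : Finset κ} (hS : S.Nonempty) {y : κ → ι → R} {k : κ → ι}
    (hk : Set.InjOn k S) (hy : ∀ j ∈ S, IsPivot v (y j) (k j)) :
    ∃ j ∈ S, IsPivot v (∑ i ∈ S, y i) (k j) := by
  induction hS using Finset.Nonempty.cons_induction with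
  | singleton a => simpa using hy
  | cons a S ha _ ih =>
    simp only [Finset.forall_mem_cons] at hy
    obtain ⟨j, hjS, hj⟩ := ih (hk.mono (Finset.subset_cons ha)) hy.2
    have haj : k a ≠ k j := hk.ne (Finset.mem_cons_self a S) (Finset.mem_cons_of_mem hjS)
      (ne_of_mem_of_not_mem hjS ha).symm
    rw [Finset.sum_cons]
    rcases hy.1.add hj haj with h | h
    · exact ⟨a, Finset.mem_cons_self a S, h⟩
    · exact ⟨j, Finset.mem_cons_of_mem hjS, h⟩

end IsPivot

end Pivot

theorem map_one_eq_zero_of_map_mul {M Γ : Type*} [MulOneClass M]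
    [LinearOrderedAddCommMonoidWithTop Γ] {v : M → Γ} (hmul : ∀ a b, v (a * b) = v a + v b)
    (h : v 1 ≠ ⊤) : v 1 = 0 := by
  rw [← add_right_inj_of_ne_top h, ← hmul, mul_one, add_zero]

theorem stmt19_general {R Γ ι κ : Type*} [Ring R] [LinearOrderedAddCommMonoidWithTop Γ]
    [LinearOrder ι] (v : AddValuation R Γ) (hv : ∀ a, v a = ⊤ → a = 0)
    {x : κ → ι → R} {k : κ → ι} (hk : Function.Injective k)
    (hx : ∀ j, IsPivot v (x j) (k j)) : LinearIndependent R x := by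
  classical
  rw [linearIndependent_iff']
  intro S g hg
  by_contra! ⟨i, hiS, hi⟩
  let T := {j ∈ S | g j ≠ 0}
  have hT : T.Nonempty := ⟨i, Finset.mem_filter.2 ⟨hiS, hi⟩⟩
  have hpivot : ∀ j ∈ T, IsPivot v (g j • x j) (k j) :=
    fun j hj ↦ (hx j).smul (mt (hv _) (Finset.mem_filter.1 hj).2)
  obtain ⟨j, -, hj⟩ := IsPivot.exists_sum hT hk.injOn hpivot
  have hsum : ∑ j ∈ T, g j • x j = ∑ j ∈ S, g j • x j :=
    Finset.sum_filter_of_ne fun j _ hne hgj ↦ hne (by rw [hgj, zero_smul])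
  exact hj.ne_zero (hsum.trans hg)

/-- Let `v` be a non-Archimedean valuation on a field `F`. If `x¹, …, x^t` are
nonzero vectors in `Fⁿ` whose colours `c_v(x¹) < … < c_v(x^t)` are strictly
increasing, where `c_v(u)` is the least index attaining `min_i v(u_i)`, then
`x¹, …, x^t` are linearly independent. Here the indices `k j = c_v(x j)` are
characterised by: `v (x j (k j))` is minimal among all coordinates, and strictly
smaller than `v (x j i)` for all earlier indices `i < k j`. -/
theorem stmt19 {F : Type*} [Field F] (v : F → WithTop ℝ)
    (hv0 : ∀ x : F, v x = ⊤ ↔ x = 0)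
    (hvmul : ∀ a b : F, v (a * b) = v a + v b)
    (hvadd : ∀ a b : F, min (v a) (v b) ≤ v (a + b))
    {n t : ℕ} (x : Fin t → (Fin n → F)) (hx : ∀ j, x j ≠ 0)
    (k : Fin t → Fin n) (hk : StrictMono k)
    (hmin : ∀ j : Fin t, (∀ i : Fin n, v (x j (k j)) ≤ v (x j i)) ∧
      (∀ i : Fin n, i < k j → v (x j (k j)) < v (x j i))) :
    LinearIndependent F x := by
  let w : AddValuation F (WithTop ℝ) := .of v ((hv0 0).2 rfl)
    (map_one_eq_zero_of_map_mul hvmul (mt (hv0 1).1 one_ne_zero)) hvadd hvmul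
  have hw : ∀ a, w a = ⊤ → a = 0 := fun a ↦ (hv0 a).1
  exact stmt19_general w hw hk.injective fun j ↦ .of_ne_zero hw (hx j) (hmin j).1 (hmin j).2
end
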